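/- Let n ≥ 1 and N = (N_0, …, N_n) ∈ ℤ^{n+1} with N_0 + ⋯ + N_n = 0 be such that the flow polytope F_n(N) is nonempty. Then sup_{f ∈ F_n(N)} e^{H(f)} ≥ K_n(N) ≥ (max_{0 ≤ k ≤ n−1} e^{h(s_k)}) / (∏_{k=0}^{n−1} e^{h(s_k)})² · sup_{f ∈ F_n(N)} e^{H(f)}. -/

import Mathlib

open Finset

/-- The entropy-like function `h(t) = (t+1)·log(t+1) − t·log t` (with `h 0 = 0`
since `Real.log 0 = 0`). -/
noncomputable def entH (t : ℝ) : ℝ := (t + 1) * Real.log (t + 1) - t * Real.log t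

/-- `f` is an integer flow on the complete graph `k_{n+1}` with netflow `N`:
`f i j` is the flow on the edge `(i,j)` for `i < j`, it vanishes for `i ≥ j`,
and the netflow at each vertex `i` is `N i`. -/
def IsIntFlow (n : ℕ) (N : Fin (n + 1) → ℤ) (f : Fin (n + 1) → Fin (n + 1) → ℕ) : Prop :=
  (∀ i j : Fin (n + 1), ¬ i < j → f i j = 0) ∧
  ∀ i : Fin (n + 1),
    (∑ j : Fin (n + 1), if i < j then (f i j : ℤ) else 0) -
      (∑ k : Fin (n + 1), if k < i then (f k i : ℤ) else 0) = N i

/-- The Kostant partition function: the number of integer flows on the complete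
graph `k_{n+1}` with netflow `N`. -/
noncomputable def Kn (n : ℕ) (N : Fin (n + 1) → ℤ) : ℕ :=
  Nat.card {f : Fin (n + 1) → Fin (n + 1) → ℕ // IsIntFlow n N f}

/-- The flow polytope of the complete graph `k_{n+1}` with netflow `N`. -/
def FlowPolytope (n : ℕ) (N : Fin (n + 1) → ℝ) : Set (Fin (n + 1) → Fin (n + 1) → ℝ) :=
  {f | (∀ i j : Fin (n + 1), i < j → 0 ≤ f i j) ∧
    (∀ i j : Fin (n + 1), ¬ i < j → f i j = 0) ∧
    ∀ i : Fin (n + 1),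
      (∑ j : Fin (n + 1), if i < j then f i j else 0) -
        (∑ k : Fin (n + 1), if k < i then f k i else 0) = N i}

/-- The flow entropy `H(f)`. -/
noncomputable def flowEntropy (n : ℕ) (N : Fin (n + 1) → ℝ)
    (f : Fin (n + 1) → Fin (n + 1) → ℝ) : ℝ :=
  (∑ i : Fin (n + 1), ∑ j : Fin (n + 1), if i < j then entH (f i j) else 0) +
  ∑ j : Fin (n + 1), if 0 < (j : ℕ) ∧ (j : ℕ) < n then
    entH (∑ i : Fin (n + 1), if i < j then (N i - f i j) else 0) else 0

/-- Partial sums `s_k = N_0 + ⋯ + N_k`. -/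
def sPartial (n : ℕ) (N : Fin (n + 1) → ℤ) (k : ℕ) : ℤ :=
  ∑ j : Fin (n + 1), if (j : ℕ) ≤ k then N j else 0

/-- Extend `(N_0,…,N_{n−1})` to the netflow vector `(N_0,…,N_{n−1},−∑ N_i)`. -/
def extend (n : ℕ) (N : Fin n → ℤ) : Fin (n + 1) → ℤ := Fin.snoc N (-∑ i, N i)

/-!
Putting on the diagonal, at each vertex, the amount of flow bypassing it turns a flow into an upper
triangular contingency table whose row and column sums are the partial sums of `N`, and turns the
flow entropy into `∑ h` over the entries of the table.

Upper bound: the average `b` of all integer tables is itself a table, and the entropy of the uniform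
distribution is at most that of independent geometric variables with means `b u v`, namely `∑ h(b)`.

Lower bound: the tables are counted by a coefficient of a product of complete homogeneous
polynomials, one for each row. The coefficient is extracted one variable at a time, each extraction
costing a factor `e ^ h(s)` for the row or column sum `s`, provided that the counts are log-concave
in each single column sum. This holds because the counts are limits of a discrete Gaussian on a
lattice convolved with geometric series: the Gaussian is Lorentzian, and a discrete Brascamp–Lieb
inequality shows that the convolutions remain so. Since any one column sum is determined by
the other row and column sums, that column costs nothing, which is the source of the factor
`max e ^ h(s_k)`.
-/

open Filter Topology

section LogConcave

/-- Positive log-concave sequences of reals. -/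
structure IsPosLogConcave (a : ℕ → ℝ) : Prop where
  pos : ∀ k, 0 < a k
  mul_le_sq : ∀ k, a k * a (k + 2) ≤ a (k + 1) ^ 2

namespace IsPosLogConcave

variable {a : ℕ → ℝ}

theorem shift (ha : IsPosLogConcave a) : IsPosLogConcave fun k => a (k + 1) :=
  ⟨fun k => ha.pos (k + 1), fun k => ha.mul_le_sq (k + 1)⟩

theorem const_pow {x : ℝ} (hx : 0 < x) : IsPosLogConcave fun k => x ^ k :=
  ⟨fun k => pow_pos hx k, fun k => le_of_eq (by ring)⟩

theorem antitone_ratio (ha : IsPosLogConcave a) : Antitone fun k => a (k + 1) / a k :=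
  antitone_nat_of_succ_le fun k => by
    rw [div_le_div_iff₀ (ha.pos _) (ha.pos _)]
    linarith [ha.mul_le_sq k]

theorem exists_pow_mul_le (ha : IsPosLogConcave a) (β : ℕ) :
    ∃ r : ℝ, 0 < r ∧ ∀ k, a k * r ^ β ≤ a β * r ^ k := by
  have hr : 0 < a (β + 1) / a β := div_pos (ha.pos _) (ha.pos _)
  refine ⟨a (β + 1) / a β, hr, fun k => ?_⟩
  set r := a (β + 1) / a β
  have hbefore : ∀ d k, k + d = β → a k * r ^ d ≤ a β := by
    intro d
    induction d with
    | zero => rintro k rfl; simp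
    | succ d ih =>
      intro k hk
      have hratio : r ≤ a (k + 1) / a k := ha.antitone_ratio (by omega : k ≤ β)
      rw [le_div_iff₀ (ha.pos k)] at hratio
      calc a k * r ^ (d + 1) = r * a k * r ^ d := by ring
        _ ≤ a (k + 1) * r ^ d := by gcongr
        _ ≤ a β := ih (k + 1) (by omega)
  have hafter : ∀ d, a (β + d) ≤ a β * r ^ d := by
    intro d
    induction d with
    | zero => simp
    | succ d ih =>
      have hratio : a (β + d + 1) / a (β + d) ≤ r := ha.antitone_ratio (by omega : β ≤ β + d)
      rw [div_le_iff₀ (ha.pos _)] at hratio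
      calc a (β + (d + 1)) ≤ r * a (β + d) := hratio
        _ ≤ r * (a β * r ^ d) := by gcongr
        _ = a β * r ^ (d + 1) := by ring
  rcases le_total k β with hk | hk
  · obtain ⟨d, rfl⟩ := Nat.exists_eq_add_of_le hk
    calc a k * r ^ (k + d) = a k * r ^ d * r ^ k := by ring
      _ ≤ a (k + d) * r ^ k := by gcongr; exact hbefore d k rfl
  · obtain ⟨d, rfl⟩ := Nat.exists_eq_add_of_le hk
    calc a (β + d) * r ^ β ≤ a β * r ^ d * r ^ β := by gcongr; exact hafter d
      _ = a β * r ^ (β + d) := by ring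

end IsPosLogConcave

/-- Pointwise limits, from above, of positive log-concave sequences. Unlike log-concavity of
nonnegative sequences, this excludes internal zeros. -/
def IsLogConcaveLimit (φ : ℕ → ℝ) : Prop :=
  ∃ ψ : ℕ → ℕ → ℝ, (∀ m, IsPosLogConcave (ψ m)) ∧ (∀ m, φ ≤ ψ m) ∧ Tendsto ψ atTop (𝓝 φ)

theorem IsLogConcaveLimit.nonneg {φ : ℕ → ℝ} (hφ : IsLogConcaveLimit φ) (k : ℕ) : 0 ≤ φ k := by
  obtain ⟨ψ, hψ, -, hlim⟩ := hφ
  exact ge_of_tendsto' (tendsto_pi_nhds.1 hlim k) fun m => ((hψ m).pos k).le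

end LogConcave

section BrascampLieb

/-- The unnormalised variance of `r` on `{0, …, K}` with respect to the weights `a`. -/
noncomputable def weightedVariance (a r : ℕ → ℝ) (K : ℕ) : ℝ :=
  ∑ k ∈ range (K + 1), a k * r k ^ 2 -
    (∑ k ∈ range (K + 1), a k * r k) ^ 2 / ∑ k ∈ range (K + 1), a k

theorem add_sq_le_add_mul_add {X E p q d g : ℝ} (hp : 0 < p) (hq : 0 ≤ q) (hE : 0 ≤ E)
    (hd : d ^ 2 ≤ X * p) (hg : g ^ 2 ≤ E * q) : (g + d) ^ 2 ≤ (X + E) * (p + q) := by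
  have hX : 0 ≤ X := nonneg_of_mul_nonneg_left ((sq_nonneg d).trans hd) hp
  have h := Finset.sum_sq_le_sum_mul_sum_of_sq_le_mul univ (r := ![d, g]) (f := ![X, E])
    (g := ![p, q]) (by simp [Fin.forall_fin_two, hX, hE]) (by simp [Fin.forall_fin_two, hp.le, hq])
    (by simp [Fin.forall_fin_two, hd, hg])
  simpa [Fin.sum_univ_two, add_comm] using h

theorem weightedVariance_succ {a : ℕ → ℝ} (ha : ∀ k, 0 < a k) (r : ℕ → ℝ) (K : ℕ) :
    let S := ∑ k ∈ range (K + 1), a (k + 1)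
    let T := ∑ k ∈ range (K + 1), a (k + 1) * r (k + 1)
    weightedVariance a r (K + 1) =
      weightedVariance (fun k => a (k + 1)) (fun k => r (k + 1)) K +
        a 0 * S / (S + a 0) * (T / S - r 0) ^ 2 := by
  intro S T
  have ha₀ : 0 < a 0 := ha 0
  have hS : 0 < S := sum_pos (fun k _ => ha (k + 1)) nonempty_range_add_one
  simp only [weightedVariance, sum_range_succ' _ (K + 1)]
  change _ - (T + a 0 * r 0) ^ 2 / (S + a 0) = _ - T ^ 2 / S + _
  field_simp
  ring

/-- The induction step of the discrete Brascamp–Lieb inequality, where `δ` is the distance from the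
mean of the old points to the first of them, `g` the distance from there to the new point, and `X`
the defect in the inequality for the old points. -/
theorem brascampLieb_step {a a₁ a₂ S X E g δ : ℝ} (ha : 0 < a) (ha₁ : 0 < a₁) (hS : 0 < S)
    (hlc : a * a₂ ≤ a₁ ^ 2) (hE : 0 ≤ E) (hgap : 0 < a₁ / S - 1 + a₂ / a₁)
    (hδ : a₁ * δ ^ 2 ≤ X * (a₁ / S - 1 + a₂ / a₁))
    (hg : a * a₁ ^ 2 * g ^ 2 ≤ E * (a₁ ^ 2 - a * a₂)) :
    0 < a / (S + a) - 1 + a₁ / a ∧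
    a * (S / (S + a) * (g + δ)) ^ 2 ≤
      (X + E - a * S / (S + a) * (g + δ) ^ 2) * (a / (S + a) - 1 + a₁ / a) := by
  set p := (a₁ / S - 1 + a₂ / a₁) / a₁ with hp_def
  set q := (a₁ ^ 2 - a * a₂) / (a * a₁ ^ 2) with hq_def
  have hp : 0 < p := by positivity
  have hq : 0 ≤ q := div_nonneg (by linarith) (by positivity)
  have hδp : δ ^ 2 ≤ X * p := by rw [hp_def, ← mul_div_assoc, le_div_iff₀ ha₁]; linarith
  have hgq : g ^ 2 ≤ E * q := by
    rw [hq_def, ← mul_div_assoc, le_div_iff₀ (by positivity)]; linarith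
  have hpq : a / (S + a) - 1 + a₁ / a = S * a₁ / (S + a) * (p + q) := by
    rw [hp_def, hq_def]; field_simp; ring
  refine ⟨by rw [hpq]; positivity, ?_⟩
  have hsplit : a * (S / (S + a) * (g + δ)) ^ 2 +
      a * S / (S + a) * (g + δ) ^ 2 * (a / (S + a) - 1 + a₁ / a) =
      S * a₁ / (S + a) * (g + δ) ^ 2 := by
    field_simp; ring
  have hcs : S * a₁ / (S + a) * (g + δ) ^ 2 ≤ S * a₁ / (S + a) * ((X + E) * (p + q)) := by
    gcongr
    exact add_sq_le_add_mul_add hp hq hE hδp hgq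
  rw [sub_mul, le_sub_iff_add_le, hsplit, hpq]
  linarith

variable {a r E : ℕ → ℝ}

-- The bound on the first point's distance to the mean is what makes the induction close.
theorem IsPosLogConcave.mul_mean_sub_sq_le (ha : IsPosLogConcave a) (hE : ∀ k, 0 ≤ E k)
    (hstep : ∀ k, a k * a (k + 1) ^ 2 * (r (k + 1) - r k) ^ 2 ≤
      E k * (a (k + 1) ^ 2 - a k * a (k + 2))) (K : ℕ) :
    let S := ∑ k ∈ range (K + 1), a k
    let T := ∑ k ∈ range (K + 1), a k * r k
    0 < a 0 / S - 1 + a 1 / a 0 ∧ a 0 * (T / S - r 0) ^ 2 ≤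
      (∑ k ∈ range (K + 1), E k - weightedVariance a r K) * (a 0 / S - 1 + a 1 / a 0) := by
  induction K generalizing a r E with
  | zero =>
    have h₀ := ha.pos 0
    have hratio : 0 < a 1 / a 0 := div_pos (ha.pos 1) h₀
    have hvar : a 0 * r 0 ^ 2 - (a 0 * r 0) ^ 2 / a 0 = 0 := by field_simp; ring
    simp only [weightedVariance, zero_add, sum_range_one, hvar, div_self h₀.ne', sub_self,
      mul_div_cancel_left₀ _ h₀.ne', sub_zero, ne_eq, OfNat.ofNat_ne_zero, not_false_eq_true,
      zero_pow, mul_zero]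
    exact ⟨hratio, mul_nonneg (hE 0) hratio.le⟩
  | succ K ih =>
    intro S' T'
    obtain ⟨hgap, htail⟩ :=
      ih (r := fun k => r (k + 1)) ha.shift (fun k => hE (k + 1)) fun k => hstep (k + 1)
    have h₀ := ha.pos 0
    have hS : 0 < ∑ k ∈ range (K + 1), a (k + 1) :=
      sum_pos (fun k _ => ha.pos (k + 1)) nonempty_range_add_one
    have hS' : S' = ∑ k ∈ range (K + 1), a (k + 1) + a 0 := sum_range_succ' _ _
    have hT' : T' = ∑ k ∈ range (K + 1), a (k + 1) * r (k + 1) + a 0 * r 0 := sum_range_succ' _ _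
    rw [hS', hT', sum_range_succ' E, weightedVariance_succ ha.pos]
    set S := ∑ k ∈ range (K + 1), a (k + 1)
    set T := ∑ k ∈ range (K + 1), a (k + 1) * r (k + 1)
    have hmean : (T + a 0 * r 0) / (S + a 0) - r 0 =
        S / (S + a 0) * (r 1 - r 0 + (T / S - r 1)) := by
      field_simp; ring
    have hdist : T / S - r 0 = r 1 - r 0 + (T / S - r 1) := by ring
    rw [hmean, hdist, ← sub_sub, add_sub_right_comm]
    exact brascampLieb_step h₀ (ha.pos 1) hS (ha.mul_le_sq 0) (hE 0) hgap htail (hstep 0)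

theorem IsPosLogConcave.weightedVariance_le (ha : IsPosLogConcave a) (hE : ∀ k, 0 ≤ E k)
    (hstep : ∀ k, a k * a (k + 1) ^ 2 * (r (k + 1) - r k) ^ 2 ≤
      E k * (a (k + 1) ^ 2 - a k * a (k + 2))) (K : ℕ) :
    weightedVariance a r K ≤ ∑ k ∈ range (K + 1), E k := by
  obtain ⟨hgap, h⟩ := ha.mul_mean_sub_sq_le hE hstep K
  have hsq := mul_nonneg (ha.pos 0).le
    (sq_nonneg ((∑ k ∈ range (K + 1), a k * r k) / ∑ k ∈ range (K + 1), a k - r 0))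
  exact sub_nonneg.1 (nonneg_of_mul_nonneg_left (hsq.trans h) hgap)

end BrascampLieb

section LorentzianForm

variable {V : Type*} [AddCommGroup V] [Module ℝ V]

/-- A symmetric bilinear form with at most one positive direction, encoded as the reversed
Cauchy–Schwarz inequality against every vector of positive square. -/
structure IsLorentzianForm (A : LinearMap.BilinForm ℝ V) : Prop where
  isSymm : A.IsSymm
  mul_le_sq : ∀ x v, 0 < A v v → A x x * A v v ≤ A x v ^ 2

theorem isLorentzianForm_of_nonpos_on_ker {A : LinearMap.BilinForm ℝ V} (hA : A.IsSymm)
    (l : V →ₗ[ℝ] ℝ) (h : ∀ z, l z = 0 → A z z ≤ 0) : IsLorentzianForm A := by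
  refine ⟨hA, fun x v hv => ?_⟩
  have hlv : l v ≠ 0 := fun h0 => (h v h0).not_gt hv
  have hz := h (l v • x - l x • v) (by simp [mul_comm])
  simp only [map_sub, map_smul, LinearMap.sub_apply, LinearMap.smul_apply, smul_eq_mul] at hz
  rw [hA.eq v x] at hz
  have hscaled : l v ^ 2 * (A x x * A v v) ≤ l v ^ 2 * A x v ^ 2 := by
    nlinarith [mul_nonpos_of_nonneg_of_nonpos hv.le hz, sq_nonneg (l x * A v v - l v * A x v)]
  exact le_of_mul_le_mul_left hscaled (by positivity)

namespace IsLorentzianForm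

variable {A : LinearMap.BilinForm ℝ V}

theorem smul (hA : IsLorentzianForm A) {t : ℝ} (ht : 0 < t) : IsLorentzianForm (t • A) := by
  refine ⟨⟨fun x y => ?_⟩, fun x v hv => ?_⟩
  · simp [hA.isSymm.eq x y]
  · simp only [LinearMap.smul_apply, smul_eq_mul] at hv ⊢
    have h := hA.mul_le_sq x v (pos_of_mul_pos_right hv ht.le)
    linear_combination t ^ 2 * h

theorem sq_mul_sub_mul_le (hA : IsLorentzianForm A) (x u v : V) (hu : 0 < A u u) :
    (A x v * A u u - A x u * A u v) ^ 2 ≤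
      (A x u ^ 2 - A x x * A u u) * (A u v ^ 2 - A v v * A u u) := by
  have hquad (s : ℝ) : 0 ≤ (A u v ^ 2 - A v v * A u u) * (s * s) +
      2 * (A x u * A u v - A x v * A u u) * s + (A x u ^ 2 - A x x * A u u) := by
    have h := hA.mul_le_sq (x + s • v) u hu
    simp only [map_add, map_smul, LinearMap.add_apply, LinearMap.smul_apply, smul_eq_mul] at h
    rw [hA.isSymm.eq v x, hA.isSymm.eq v u] at h
    linear_combination h
  have hdiscrim := discrim_le_zero hquad
  rw [discrim] at hdiscrim
  linear_combination hdiscrim / 4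

end IsLorentzianForm

section Chain

variable {A : ℕ → LinearMap.BilinForm ℝ V} {u v : V}

theorem isPosLogConcave_of_chain (hA : ∀ k, IsLorentzianForm (A k))
    (hchain : ∀ k, A (k + 1) u = A k v) (hpos : ∀ k, 0 < A k u u) :
    IsPosLogConcave fun k => A k u u := by
  refine ⟨hpos, fun k => ?_⟩
  have huv : A k u v = A (k + 1) u u := by rw [hchain, (hA k).isSymm.eq]
  have hvv : A k v v = A (k + 2) u u := by
    rw [← hchain, (hA _).isSymm.eq, ← hchain]
  rw [← huv, ← hvv]
  exact (hA k).mul_le_sq u v (hvv ▸ hpos _)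

theorem chain_step_le (hA : ∀ k, IsLorentzianForm (A k)) (hchain : ∀ k, A (k + 1) u = A k v)
    (hpos : ∀ k, 0 < A k u u) (x : V) (k : ℕ) :
    A k u u * A (k + 1) u u ^ 2 * (A (k + 1) u x / A (k + 1) u u - A k u x / A k u u) ^ 2 ≤
      (A k u x ^ 2 / A k u u - A k x x) * (A (k + 1) u u ^ 2 - A k u u * A (k + 2) u u) := by
  have huv : A k u v = A (k + 1) u u := by rw [hchain, (hA k).isSymm.eq]
  have hvv : A k v v = A (k + 2) u u := by rw [← hchain, (hA _).isSymm.eq, ← hchain]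
  have hxv : A k x v = A (k + 1) u x := by rw [hchain, (hA k).isSymm.eq]
  have h := (hA k).sq_mul_sub_mul_le x u v (hpos k)
  rw [huv, hvv, hxv, (hA k).isSymm.eq x u] at h
  have h₀ := hpos k
  have h₁ := hpos (k + 1)
  calc _ = (A (k + 1) u x * A k u u - A k u x * A (k + 1) u u) ^ 2 / A k u u := by field_simp
    _ ≤ (A k u x ^ 2 - A k x x * A k u u) * (A (k + 1) u u ^ 2 - A (k + 2) u u * A k u u) /
        A k u u := by gcongr
    _ = _ := by field_simp

/-- The discrete Brascamp–Lieb inequality, applied to the sequences `A k u u` and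
`A k u x / A k u u`, bounds the sum on the orthogonal complement of `u`. -/
theorem isLorentzianForm_sum_of_chain (hA : ∀ k, IsLorentzianForm (A k))
    (hchain : ∀ k, A (k + 1) u = A k v) (hpos : ∀ k, 0 < A k u u) (K : ℕ) :
    IsLorentzianForm (∑ k ∈ range (K + 1), A k) := by
  have hsymm : (∑ k ∈ range (K + 1), A k).IsSymm :=
    ⟨fun x y => by simp [LinearMap.sum_apply, fun k => (hA k).isSymm.eq x y]⟩
  refine isLorentzianForm_of_nonpos_on_ker hsymm ((∑ k ∈ range (K + 1), A k) u) fun x hx => ?_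
  have hdefect (k : ℕ) : 0 ≤ A k u x ^ 2 / A k u u - A k x x := by
    rw [sub_nonneg, le_div_iff₀ (hpos k), ← (hA k).isSymm.eq x u]
    exact (hA k).mul_le_sq x u (hpos k)
  have hvar := (isPosLogConcave_of_chain hA hchain hpos).weightedVariance_le
    (r := fun k => A k u x / A k u u) hdefect (chain_step_le hA hchain hpos x) K
  have hmean : ∑ k ∈ range (K + 1), A k u u * (A k u x / A k u u) = 0 := by
    rw [← hx, LinearMap.sum_apply, LinearMap.sum_apply]
    exact sum_congr rfl fun k _ => mul_div_cancel₀ _ (hpos k).ne'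
  have hsq : ∑ k ∈ range (K + 1), A k u u * (A k u x / A k u u) ^ 2 =
      ∑ k ∈ range (K + 1), A k u x ^ 2 / A k u u :=
    sum_congr rfl fun k _ => by field_simp [(hpos k).ne']
  rw [weightedVariance, hmean, hsq, sum_sub_distrib, zero_pow two_ne_zero, zero_div,
    sub_zero] at hvar
  simp only [LinearMap.sum_apply]
  linarith

end Chain

end LorentzianForm

section LorentzianFunction

variable {Λ ι : Type*} [AddCommGroup Λ] [Fintype ι] [DecidableEq ι]

/-- The symmetric form with matrix `c (γ + e j + e k)`: the Hessian at `γ` of the function `c` on a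
lattice, with respect to the steps `e`. -/
noncomputable def latticeHessian (e : ι → Λ) (c : Λ → ℝ) (γ : Λ) : LinearMap.BilinForm ℝ (ι → ℝ) :=
  Matrix.toBilin' (Matrix.of fun j k => c (γ + e j + e k))

/-- The lattice analogue of a Lorentzian polynomial: a positive function all of whose Hessians are
Lorentzian. -/
structure IsLorentzianFunction (e : ι → Λ) (c : Λ → ℝ) : Prop where
  pos : ∀ p, 0 < c p
  hessian : ∀ γ, IsLorentzianForm (latticeHessian e c γ)

variable (e : ι → Λ) (c : Λ → ℝ) (γ : Λ)

theorem latticeHessian_apply (x y : ι → ℝ) :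
    latticeHessian e c γ x y = ∑ i, ∑ j, x i * c (γ + e i + e j) * y j := by
  simp [latticeHessian, Matrix.toBilin'_apply]

theorem latticeHessian_single (i j : ι) :
    latticeHessian e c γ (Pi.single i 1) (Pi.single j 1) = c (γ + e i + e j) := by
  simp [latticeHessian]

theorem latticeHessian_isSymm : (latticeHessian e c γ).IsSymm := by
  refine ⟨fun x y => ?_⟩
  rw [latticeHessian_apply, latticeHessian_apply, sum_comm]
  refine sum_congr rfl fun i _ => sum_congr rfl fun j _ => ?_
  rw [add_right_comm]; ring

variable {e c}

theorem IsLorentzianFunction.mul_le_sq (hc : IsLorentzianFunction e c) (i j : ι) :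
    c (γ + e i + e i) * c (γ + e j + e j) ≤ c (γ + e i + e j) ^ 2 := by
  have h := (hc.hessian γ).mul_le_sq (Pi.single i 1) (Pi.single j 1)
  simp only [latticeHessian_single] at h
  exact h (hc.pos _)

section GroupAlgebra

/-- The group algebra of `Λ` acting on functions on `Λ` by convolution. -/
noncomputable def groupAlgebraAction : AddMonoidAlgebra ℝ Λ →ₐ[ℝ] Module.End ℝ (Λ → ℝ) :=
  AddMonoidAlgebra.lift ℝ _ Λ
    { toFun d := LinearMap.funLeft ℝ ℝ fun p => p - d.toAdd
      map_one' := by ext; simp [LinearMap.funLeft]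
      map_mul' d d' := by ext; simp [LinearMap.funLeft, sub_sub] }

theorem groupAlgebraAction_single (d : Λ) (r : ℝ) (c : Λ → ℝ) (p : Λ) :
    groupAlgebraAction (AddMonoidAlgebra.single d r) c p = r * c (p - d) := by
  simp [groupAlgebraAction, LinearMap.funLeft]

/-- The truncated geometric series `1 + t T + ⋯ + t ^ L T ^ L` in the translation `T` by `d`. -/
noncomputable def truncatedGeometric (L : ℕ) (d : Λ) (t : ℝ) : AddMonoidAlgebra ℝ Λ :=
  ∑ k ∈ range (L + 1), AddMonoidAlgebra.single (k • d) (t ^ k)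

theorem groupAlgebraAction_truncatedGeometric (L : ℕ) (d : Λ) (t : ℝ) (c : Λ → ℝ) (p : Λ) :
    groupAlgebraAction (truncatedGeometric L d t) c p =
      ∑ k ∈ range (L + 1), t ^ k * c (p - k • d) := by
  simp [truncatedGeometric, LinearMap.sum_apply, Finset.sum_apply, groupAlgebraAction_single]

theorem groupAlgebraAction_prod_truncatedGeometric {E : Type*} [Fintype E] [DecidableEq E] (L : ℕ)
    (d : E → Λ) (τ : E → ℝ) (c : Λ → ℝ) (p : Λ) :
    groupAlgebraAction (∏ x, truncatedGeometric L (d x) (τ x)) c p =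
      ∑ B ∈ Fintype.piFinset fun _ : E => range (L + 1),
        (∏ x, τ x ^ B x) * c (p - ∑ x, B x • d x) := by
  simp [truncatedGeometric, prod_univ_sum, AddMonoidAlgebra.prod_single, LinearMap.sum_apply,
    Finset.sum_apply, groupAlgebraAction_single]

namespace IsLorentzianFunction

theorem convolve_truncatedGeometric_of_pos (hc : IsLorentzianFunction e c) (a b : ι) {t : ℝ}
    (ht : 0 < t) (L : ℕ) :
    IsLorentzianFunction e (groupAlgebraAction (truncatedGeometric L (e b - e a) t) c) := by
  refine ⟨fun p => ?_, fun γ => ?_⟩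
  · rw [groupAlgebraAction_truncatedGeometric]
    exact sum_pos (fun k _ => mul_pos (pow_pos ht k) (hc.pos _)) nonempty_range_add_one
  let A (k : ℕ) := t ^ k • latticeHessian e c (γ - k • (e b - e a))
  have hA (k : ℕ) : IsLorentzianForm (A k) := (hc.hessian _).smul (pow_pos ht k)
  have hpos (k : ℕ) : 0 < A k (Pi.single b 1) (Pi.single b 1) := by
    simpa [A, latticeHessian_single] using mul_pos (pow_pos ht k) (hc.pos _)
  have hchain (k : ℕ) : A (k + 1) (Pi.single b 1) = A k (t • Pi.single a 1) := by
    have hshift : γ - (k + 1) • (e b - e a) + e b = γ - k • (e b - e a) + e a := by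
      rw [succ_nsmul]; abel
    ext x
    simp [A, latticeHessian_single, hshift, pow_succ, mul_assoc, mul_left_comm]
  convert isLorentzianForm_sum_of_chain hA hchain hpos L using 1
  ext i j
  simp only [A, LinearMap.sum_apply, LinearMap.smul_apply, smul_eq_mul, LinearMap.comp_apply,
    LinearMap.coe_single, latticeHessian_single, groupAlgebraAction_truncatedGeometric]
  refine sum_congr rfl fun k _ => ?_
  rw [show γ - k • (e b - e a) + e i + e j = γ + e i + e j - k • (e b - e a) by abel]

theorem convolve_truncatedGeometric (hc : IsLorentzianFunction e c) (a b : ι) {t : ℝ}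
    (ht : 0 ≤ t) (L : ℕ) :
    IsLorentzianFunction e (groupAlgebraAction (truncatedGeometric L (e b - e a) t) c) := by
  rcases ht.eq_or_lt with rfl | ht
  · convert hc
    funext p
    simp [groupAlgebraAction_truncatedGeometric, sum_range_succ']
  · exact hc.convolve_truncatedGeometric_of_pos a b ht L

theorem convolve_prod_truncatedGeometric {E : Type*} (hc : IsLorentzianFunction e c)
    (s : Finset E) (a b : E → ι) {τ : E → ℝ} (hτ : ∀ x, 0 ≤ τ x) (L : ℕ) :
    IsLorentzianFunction e
      (groupAlgebraAction (∏ x ∈ s, truncatedGeometric L (e (b x) - e (a x)) (τ x)) c) := by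
  classical
  induction s using Finset.induction_on with
  | empty => simpa using hc
  | insert x s hx ih =>
    rw [prod_insert hx, map_mul]
    exact ih.convolve_truncatedGeometric (a x) (b x) (hτ x) L

end IsLorentzianFunction

end GroupAlgebra

end LorentzianFunction

section DiscreteGaussian

variable {W ι : Type*} [Fintype W]

/-- The discrete Gaussian weight `q ^ ‖p‖²` on `ℤ^W`. -/
noncomputable def discreteGaussian (q : ℝ) (p : W → ℤ) : ℝ := q ^ (p ⬝ᵥ p)

theorem discreteGaussian_pos {q : ℝ} (hq : 0 < q) (p : W → ℤ) : 0 < discreteGaussian q p :=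
  zpow_pos hq _

theorem discreteGaussian_nonneg {q : ℝ} (hq : 0 ≤ q) (p : W → ℤ) : 0 ≤ discreteGaussian q p :=
  zpow_nonneg hq _

theorem discreteGaussian_zero_right (q : ℝ) : discreteGaussian q (0 : W → ℤ) = 1 := by
  simp [discreteGaussian]

theorem tendsto_discreteGaussian (p : W → ℤ) :
    Tendsto (fun q => discreteGaussian q p) (𝓝 0) (𝓝 (if p = 0 then 1 else 0)) := by
  have hp : 0 ≤ p ⬝ᵥ p := sum_nonneg fun w _ => mul_self_nonneg (p w)
  have hlim := (continuousAt_zpow₀ (0 : ℝ) (p ⬝ᵥ p) (Or.inr hp)).tendsto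
  rwa [zero_zpow_eq, if_congr dotProduct_self_eq_zero rfl rfl] at hlim

theorem discreteGaussian_mul_add_add {q : ℝ} (hq : q ≠ 0) (γ a b : W → ℤ) :
    discreteGaussian q γ * discreteGaussian q (γ + a + b) =
      discreteGaussian q (γ + a) * discreteGaussian q (γ + b) * q ^ (2 * a ⬝ᵥ b) := by
  simp only [discreteGaussian, ← zpow_add₀ hq]
  congr 1
  simp only [add_dotProduct, dotProduct_add]
  rw [dotProduct_comm b γ, dotProduct_comm a γ, dotProduct_comm b a]
  ring

theorem isLorentzianFunction_discreteGaussian [Fintype ι] [DecidableEq ι] {e : ι → W → ℤ}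
    (he : Pairwise fun i j => e i ⬝ᵥ e j = 0) {q : ℝ} (hq : 0 < q) (hq1 : q ≤ 1) :
    IsLorentzianFunction e (discreteGaussian q) := by
  refine ⟨discreteGaussian_pos hq, fun γ => ?_⟩
  let θ := discreteGaussian q (W := W)
  refine isLorentzianForm_of_nonpos_on_ker (latticeHessian_isSymm ..)
    (∑ i, θ (γ + e i) • LinearMap.proj i) fun z hz => ?_
  have hker : ∑ i, z i * θ (γ + e i) = 0 := by simpa [LinearMap.sum_apply, mul_comm] using hz
  have hentry (i j : ι) : θ γ * (z i * θ (γ + e i + e j) * z j) =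
      z i * θ (γ + e i) * (z j * θ (γ + e j)) -
        if i = j then (z i * θ (γ + e i)) ^ 2 * (1 - q ^ (2 * e i ⬝ᵥ e i)) else 0 := by
    have hθ := discreteGaussian_mul_add_add hq.ne' γ (e i) (e j)
    split_ifs with hij
    · subst hij
      linear_combination z i ^ 2 * hθ
    · rw [he hij, mul_zero, zpow_zero] at hθ
      linear_combination z i * z j * hθ
  have hform : θ γ * latticeHessian e θ γ z z =
      -∑ i, (z i * θ (γ + e i)) ^ 2 * (1 - q ^ (2 * e i ⬝ᵥ e i)) := by
    simp_rw [latticeHessian_apply, mul_sum, hentry, sum_sub_distrib, ← mul_sum, hker]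
    simp
  have hκ (i : ι) : q ^ (2 * e i ⬝ᵥ e i) ≤ 1 :=
    zpow_le_one₀ hq hq1 (mul_nonneg two_pos.le (sum_nonneg fun w _ => mul_self_nonneg _))
  have hsum : 0 ≤ ∑ i, (z i * θ (γ + e i)) ^ 2 * (1 - q ^ (2 * e i ⬝ᵥ e i)) :=
    sum_nonneg fun i _ => mul_nonneg (sq_nonneg _) (sub_nonneg.2 (hκ i))
  exact nonpos_of_mul_nonpos_right (hform.trans_le (neg_nonpos.2 hsum)) (discreteGaussian_pos hq γ)

end DiscreteGaussian

section Boundary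

variable {W E : Type*} [DecidableEq W]

/-- The steps along the coordinate axes of `ℤ^W`, together with the zero step `none`. -/
def axisStep : Option W → W → ℤ
  | none => 0
  | some w => Pi.single w 1

theorem axisStep_none : axisStep (none : Option W) = 0 := rfl

theorem axisStep_some (w : W) : axisStep (some w) = Pi.single w 1 := rfl

variable [Fintype W]

theorem pairwise_axisStep_dotProduct :
    Pairwise fun i j : Option W => axisStep i ⬝ᵥ axisStep j = 0 := by
  rintro (_ | i) (_ | j) hij <;> simp_all [axisStep, eq_comm]

variable [Fintype E] [DecidableEq E]

/-- The integer weights `B ≤ L` on the edges `a x → b x` of a graph whose boundary is `p`, where the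
vertex `none` does not contribute to the boundary. -/
def boundaryFiber (a b : E → Option W) (L : ℕ) (p : W → ℤ) : Finset (E → ℕ) :=
  {B ∈ Fintype.piFinset fun _ => range (L + 1) |
    ∑ x, B x • (axisStep (b x) - axisStep (a x)) = p}

theorem sum_boundaryFiber_eq (a b : E → Option W) (τ : E → ℝ) (L : ℕ) (p : W → ℤ) :
    ∑ B ∈ boundaryFiber a b L p, ∏ x, τ x ^ B x =
      ∑ B ∈ Fintype.piFinset fun _ => range (L + 1), (∏ x, τ x ^ B x) *
        if p - ∑ x, B x • (axisStep (b x) - axisStep (a x)) = 0 then 1 else 0 := by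
  simp only [boundaryFiber, sum_filter, sub_eq_zero, mul_ite, mul_one, mul_zero, eq_comm (a := p)]

-- Smear the condition `∂B = p` by a discrete Gaussian, and let the Gaussian concentrate.
theorem isLogConcaveLimit_sum_boundaryFiber (a b : E → Option W) {τ : E → ℝ} (hτ : ∀ x, 0 ≤ τ x)
    (L : ℕ) (p : W → ℤ) (v : W) :
    IsLogConcaveLimit fun k => ∑ B ∈ boundaryFiber a b L (p + k • Pi.single v 1),
      ∏ x, τ x ^ B x := by
  let f := ∏ x, truncatedGeometric L (axisStep (b x) - axisStep (a x)) (τ x)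
  let q (m : ℕ) : ℝ := 1 / (m + 1)
  have hq (m : ℕ) : 0 < q m := Nat.one_div_pos_of_nat
  refine ⟨fun m k => groupAlgebraAction f (discreteGaussian (q m)) (p + k • Pi.single v 1),
    fun m => ?_, fun m k => ?_, tendsto_pi_nhds.2 fun k => ?_⟩
  · have hθ := isLorentzianFunction_discreteGaussian (pairwise_axisStep_dotProduct (W := W)) (hq m)
      (div_le_one_of_le₀ (by simp) (by positivity))
    have hf := hθ.convolve_prod_truncatedGeometric univ a b hτ L
    refine ⟨fun k => hf.pos _, fun k => ?_⟩
    simpa only [axisStep_none, axisStep_some, add_zero, add_nsmul, one_nsmul, two_nsmul,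
      ← add_assoc] using hf.mul_le_sq (p + k • Pi.single v 1) none (some v)
  · simp only [sum_boundaryFiber_eq, f, groupAlgebraAction_prod_truncatedGeometric]
    refine sum_le_sum fun B _ =>
      mul_le_mul_of_nonneg_left ?_ (prod_nonneg fun x _ => pow_nonneg (hτ x) _)
    split_ifs with h
    · rw [h, discreteGaussian_zero_right]
    · exact discreteGaussian_nonneg (hq m).le _
  · simp only [sum_boundaryFiber_eq, f, groupAlgebraAction_prod_truncatedGeometric]
    exact tendsto_finsetSum _ fun B _ =>
      ((tendsto_discreteGaussian _).comp tendsto_one_div_add_atTop_nhds_zero_nat).const_mul _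

end Boundary

section Entropy

theorem entH_zero : entH 0 = 0 := by simp [entH]

theorem rpow_mul_exp_entH_le_one {a t : ℝ} (ha : 0 ≤ a) (ht : 0 ≤ t) (ht1 : t < 1)
    (h : t = 0 → a = 0) : t ^ a * (1 - t) * Real.exp (entH a) ≤ 1 := by
  rcases ha.eq_or_lt with rfl | ha
  · simp [entH_zero, ht]
  have ht₀ : 0 < t := ht.lt_of_ne fun h0 => ha.ne' (h h0.symm)
  have ht₁ : 0 < 1 - t := sub_pos.2 ht1
  have hlog_t := Real.log_le_sub_one_of_pos (x := t * (a + 1) / a) (by positivity)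
  have hlog_one_sub := Real.log_le_sub_one_of_pos (x := (1 - t) * (a + 1)) (by positivity)
  rw [Real.log_div (by positivity) (by positivity), Real.log_mul (by positivity) (by positivity)]
    at hlog_t
  rw [Real.log_mul (by positivity) (by positivity)] at hlog_one_sub
  have hscaled : a * (Real.log t + Real.log (a + 1) - Real.log a) ≤ t * (a + 1) - a :=
    (mul_le_mul_of_nonneg_left hlog_t ha.le).trans_eq (by field_simp)
  rw [Real.rpow_def_of_pos ht₀, ← Real.exp_log ht₁, ← Real.exp_add, ← Real.exp_add,
    Real.exp_le_one_iff, entH]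
  linarith

theorem rpow_mul_exp_entH_eq_one {a : ℝ} (ha : 0 ≤ a) :
    (a / (a + 1)) ^ a * (1 - a / (a + 1)) * Real.exp (entH a) = 1 := by
  rcases ha.eq_or_lt with rfl | ha
  · simp [entH_zero]
  have hsub : 1 - a / (a + 1) = (a + 1)⁻¹ := by field_simp; ring
  rw [hsub, Real.rpow_def_of_pos (by positivity), ← Real.exp_log (show 0 < (a + 1)⁻¹ by positivity),
    ← Real.exp_add, ← Real.exp_add, Real.log_div (by positivity) (by positivity), Real.log_inv,
    Real.exp_eq_one_iff, entH]
  ring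

end Entropy

section UnivariateCapacity

theorem le_mul_exp_entH_of_forall_pow_mul_le {C M : ℝ} {β : ℕ}
    (h : ∀ t : ℝ, 0 < t → t < 1 → C * (t ^ β * (1 - t)) ≤ M) : C ≤ M * Real.exp (entH β) := by
  let t₀ : ℝ := β / (β + 1)
  have ht₀ : 0 ≤ t₀ := by positivity
  have ht₁ : t₀ < 1 := (div_lt_one (by positivity)).2 (lt_add_one _)
  have hlim : Tendsto (fun t => C * (t ^ β * (1 - t))) (𝓝[>] t₀) (𝓝 (C * (t₀ ^ β * (1 - t₀)))) :=
    ((by fun_prop : Continuous fun t => C * (t ^ β * (1 - t))).tendsto t₀).mono_left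
      nhdsWithin_le_nhds
  have hle : C * (t₀ ^ β * (1 - t₀)) ≤ M := by
    refine le_of_tendsto hlim ?_
    filter_upwards [Ioo_mem_nhdsGT ht₁] with t ht using h t (ht₀.trans_lt ht.1) ht.2
  have hopt := rpow_mul_exp_entH_eq_one (Nat.cast_nonneg (α := ℝ) β)
  rw [Real.rpow_natCast] at hopt
  calc C = C * (t₀ ^ β * (1 - t₀)) * Real.exp (entH β) := by rw [mul_assoc, hopt, mul_one]
    _ ≤ M * Real.exp (entH β) := by gcongr

/-- The capacity bound for one variable. The hypothesis bounds the capacity of `∑ φ k x ^ k` from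
below by `C`, where an `x` for which the series diverges imposes no condition. -/
theorem IsLogConcaveLimit.le_mul_exp_entH {φ : ℕ → ℝ} (hφ : IsLogConcaveLimit φ) {C : ℝ} {β : ℕ}
    (h : ∀ x : ℝ, 0 < x → ∀ M, HasSum (fun k => φ k * x ^ k) M → C * x ^ β ≤ M) :
    C ≤ φ β * Real.exp (entH β) := by
  obtain ⟨ψ, hψ, hle, hlim⟩ := id hφ
  refine le_mul_exp_entH_of_forall_pow_mul_le fun t ht ht1 =>
    ge_of_tendsto' (tendsto_pi_nhds.1 hlim β) fun m => ?_
  obtain ⟨r, hr, hgeom⟩ := (hψ m).exists_pow_mul_le β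
  have hterm (k : ℕ) : φ k * (t / r) ^ k ≤ ψ m β / r ^ β * t ^ k := by
    calc φ k * (t / r) ^ k ≤ ψ m k * (t / r) ^ k := by gcongr; exact hle m k
      _ = ψ m k * r ^ β * (t ^ k / (r ^ k * r ^ β)) := by rw [div_pow]; field_simp
      _ ≤ ψ m β * r ^ k * (t ^ k / (r ^ k * r ^ β)) := by gcongr ?_ * _; exact hgeom k
      _ = ψ m β / r ^ β * t ^ k := by field_simp
  have hdom := (hasSum_geometric_of_lt_one ht.le ht1).mul_left (ψ m β / r ^ β)
  have hsum : Summable fun k => φ k * (t / r) ^ k :=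
    .of_nonneg_of_le (fun k => mul_nonneg (hφ.nonneg k) (by positivity)) hterm hdom.summable
  have hC : C * (t / r) ^ β ≤ ψ m β / r ^ β * (1 - t)⁻¹ :=
    (h _ (div_pos ht hr) _ hsum.hasSum).trans (hasSum_le hterm hsum.hasSum hdom)
  have ht' : 0 < 1 - t := sub_pos.2 ht1
  calc C * (t ^ β * (1 - t)) = C * (t / r) ^ β * (r ^ β * (1 - t)) := by rw [div_pow]; field_simp
    _ ≤ ψ m β / r ^ β * (1 - t)⁻¹ * (r ^ β * (1 - t)) := by gcongr
    _ = ψ m β := by field_simp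

end UnivariateCapacity

section CompleteHomogeneous

variable {ι : Type*} [DecidableEq ι]

/-- The convolution of `f` with the geometric sequence of ratio `t`, that is, the coefficients of
the product of the generating function of `f` with `1 / (1 - t X)`. -/
def geometricConvolution (t : ℝ) (f : ℕ → ℝ) (k : ℕ) : ℝ :=
  ∑ p ∈ antidiagonal k, t ^ p.1 * f p.2

theorem geometricConvolution_zero (t : ℝ) (f : ℕ → ℝ) : geometricConvolution t f 0 = f 0 := by
  simp [geometricConvolution]

theorem geometricConvolution_succ (t : ℝ) (f : ℕ → ℝ) (k : ℕ) :
    geometricConvolution t f (k + 1) = f (k + 1) + t * geometricConvolution t f k := by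
  simp only [geometricConvolution, Nat.sum_antidiagonal_succ, mul_sum, pow_succ', mul_assoc,
    pow_zero, one_mul]

theorem IsPosLogConcave.convolve_geometric {f : ℕ → ℝ} (hf : IsPosLogConcave f) {t : ℝ}
    (ht : 0 ≤ t) : IsPosLogConcave (geometricConvolution t f) := by
  have hpos (k : ℕ) : 0 < geometricConvolution t f k := by
    induction k with
    | zero => rw [geometricConvolution_zero]; exact hf.pos 0
    | succ k ih => rw [geometricConvolution_succ]; have := hf.pos (k + 1); positivity
  have hratio (k : ℕ) : geometricConvolution t f k * f (k + 2) ≤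
      geometricConvolution t f (k + 1) * f (k + 1) := by
    rw [geometricConvolution, geometricConvolution, Nat.sum_antidiagonal_succ', add_mul, sum_mul,
      sum_mul]
    refine le_add_of_nonneg_of_le (by have := hf.pos 0; have := hf.pos (k + 1); positivity)
      (sum_le_sum fun p hp => ?_)
    have hanti := hf.antitone_ratio (show p.2 ≤ k + 1 by have := mem_antidiagonal.1 hp; omega)
    rw [div_le_div_iff₀ (hf.pos _) (hf.pos _)] at hanti
    rw [mul_assoc, mul_assoc]
    exact mul_le_mul_of_nonneg_left (by linarith) (pow_nonneg ht _)
  refine ⟨hpos, fun k => ?_⟩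
  calc geometricConvolution t f k * geometricConvolution t f (k + 2)
      = geometricConvolution t f k * f (k + 2) +
        t * geometricConvolution t f k * geometricConvolution t f (k + 1) := by
        rw [geometricConvolution_succ t f (k + 1)]; ring
    _ ≤ geometricConvolution t f (k + 1) * f (k + 1) +
        t * geometricConvolution t f k * geometricConvolution t f (k + 1) := by
        gcongr ?_ + _; exact hratio k
    _ = geometricConvolution t f (k + 1) ^ 2 := by
        rw [geometricConvolution_succ]; ring

theorem IsLogConcaveLimit.convolve_geometric {f : ℕ → ℝ} (hf : IsLogConcaveLimit f) {t : ℝ}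
    (ht : 0 ≤ t) : IsLogConcaveLimit (geometricConvolution t f) := by
  obtain ⟨ψ, hψ, hle, hlim⟩ := hf
  refine ⟨fun m => geometricConvolution t (ψ m), fun m => (hψ m).convolve_geometric ht,
    fun m k => sum_le_sum fun p _ => mul_le_mul_of_nonneg_left (hle m _) (pow_nonneg ht _),
    tendsto_pi_nhds.2 fun k => tendsto_finsetSum _ fun p _ => ?_⟩
  exact (tendsto_pi_nhds.1 hlim _).const_mul _

theorem isLogConcaveLimit_single_zero_one : IsLogConcaveLimit (Pi.single 0 1) := by
  refine ⟨fun m k => (1 / ((m : ℝ) + 1)) ^ k, fun m => .const_pow (by positivity), fun m k => ?_,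
    tendsto_pi_nhds.2 fun k => ?_⟩
  · rcases k with - | k
    · simp
    · simpa using by positivity
  · rcases k with - | k
    · simp
    · simpa using (tendsto_one_div_add_atTop_nhds_zero_nat (𝕜 := ℝ)).pow (k + 1)

/-- The complete homogeneous symmetric polynomial of degree `k` in the variables `τ j`, `j ∈ s`. -/
noncomputable def completeHomogeneous (s : Finset ι) (τ : ι → ℝ) (k : ℕ) : ℝ :=
  ∑ b ∈ piAntidiag s k, ∏ j ∈ s, τ j ^ b j

theorem completeHomogeneous_empty (τ : ι → ℝ) :
    completeHomogeneous ∅ τ = Pi.single 0 1 := by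
  funext k
  rcases k with - | k <;> simp [completeHomogeneous]

theorem completeHomogeneous_cons {i : ι} {s : Finset ι} (hi : i ∉ s) (τ : ι → ℝ) :
    completeHomogeneous (cons i s hi) τ = geometricConvolution (τ i) (completeHomogeneous s τ) := by
  funext k
  simp only [completeHomogeneous, geometricConvolution, piAntidiag_cons, sum_disjiUnion, sum_map,
    addRightEmbedding_apply, prod_cons, Pi.add_apply, if_true, mul_sum]
  refine sum_congr rfl fun p _ => sum_congr rfl fun b hb => ?_
  have hbi : b i = 0 := by_contra fun h => hi ((mem_piAntidiag.1 hb).2 i h)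
  rw [hbi, zero_add]
  congr 1
  refine prod_congr rfl fun j hj => ?_
  rw [if_neg (ne_of_mem_of_not_mem hj hi), add_zero]

theorem isLogConcaveLimit_completeHomogeneous (s : Finset ι) {τ : ι → ℝ} (hτ : ∀ j, 0 ≤ τ j) :
    IsLogConcaveLimit (completeHomogeneous s τ) := by
  induction s using Finset.cons_induction with
  | empty => rw [completeHomogeneous_empty]; exact isLogConcaveLimit_single_zero_one
  | cons i s hi ih => rw [completeHomogeneous_cons]; exact ih.convolve_geometric (hτ i)

theorem completeHomogeneous_const_mul (s : Finset ι) (τ : ι → ℝ) (x : ℝ) (k : ℕ) :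
    completeHomogeneous s (fun j => x * τ j) k = completeHomogeneous s τ k * x ^ k := by
  rw [completeHomogeneous, completeHomogeneous, sum_mul]
  refine sum_congr rfl fun b hb => ?_
  simp only [mul_pow, prod_mul_distrib, prod_pow_eq_pow_sum, (mem_piAntidiag.1 hb).1, mul_comm]

theorem pow_le_completeHomogeneous {s : Finset ι} {z : ι → ℝ} (hz : ∀ j, 0 ≤ z j) {i : ι}
    (hi : i ∈ s) (k : ℕ) : z i ^ k ≤ completeHomogeneous s z k := by
  have hmem : Pi.single i k ∈ piAntidiag s k :=
    mem_piAntidiag.2 ⟨by simp [Pi.single_apply, hi], fun j hj => by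
      obtain rfl : j = i := by_contra fun h => hj (by simp [h])
      exact hi⟩
  have hterm : ∏ j ∈ s, z j ^ (Pi.single i k : ι → ℕ) j = z i ^ k := by
    rw [prod_eq_single_of_mem i hi fun j _ hj => by simp [hj], Pi.single_eq_same]
  rw [← hterm]
  exact single_le_sum (f := fun b : ι → ℕ => ∏ j ∈ s, z j ^ b j)
    (fun b _ => prod_nonneg fun j _ => pow_nonneg (hz j) _) hmem

theorem hasSum_completeHomogeneous {s : Finset ι} {z : ι → ℝ} (hz : ∀ j, 0 ≤ z j)
    (hz1 : ∀ j ∈ s, z j < 1) : HasSum (completeHomogeneous s z) (∏ j ∈ s, (1 - z j)⁻¹) := by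
  induction s using Finset.cons_induction with
  | empty => simpa [completeHomogeneous_empty] using hasSum_pi_single 0 (1 : ℝ)
  | cons i s hi ih =>
    rw [completeHomogeneous_cons, prod_cons]
    have hgeom := hasSum_geometric_of_lt_one (hz i) (hz1 i (mem_cons_self i s))
    have hrest := ih fun j hj => hz1 j (mem_cons_of_mem hj)
    have hsum := (summable_norm_sum_mul_antidiagonal_of_summable_norm hgeom.summable.norm
      hrest.summable.norm).of_norm.hasSum
    rwa [← tsum_mul_tsum_eq_tsum_sum_antidiagonal_of_summable_norm hgeom.summable.norm
      hrest.summable.norm, hgeom.tsum_eq, hrest.tsum_eq] at hsum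

theorem prod_rpow_mul_exp_entH_le_completeHomogeneous {s : Finset ι} {τ a : ι → ℝ} {α : ℕ}
    (hτ : ∀ j, 0 ≤ τ j) (ha : ∀ j, 0 ≤ a j) (hsupp : ∀ j, τ j = 0 → a j = 0)
    (hα : ∑ j ∈ s, a j = α) :
    ∏ j ∈ s, (τ j ^ a j * Real.exp (entH (a j))) ≤
      completeHomogeneous s τ α * Real.exp (entH α) := by
  refine (isLogConcaveLimit_completeHomogeneous s hτ).le_mul_exp_entH fun x hx M hM => ?_
  have hz : ∀ j, 0 ≤ x * τ j := fun j => mul_nonneg hx.le (hτ j)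
  simp only [← completeHomogeneous_const_mul s τ x] at hM
  have hz1 : ∀ j ∈ s, x * τ j < 1 := fun j hj => by
    have hgeom := hM.summable.of_nonneg_of_le (fun k => pow_nonneg (hz j) k)
      (pow_le_completeHomogeneous hz hj)
    rwa [summable_geometric_iff_norm_lt_one, Real.norm_of_nonneg (hz j)] at hgeom
  rw [hM.unique (hasSum_completeHomogeneous hz hz1), ← Real.rpow_natCast, ← hα,
    Real.rpow_sum_of_pos hx, ← prod_mul_distrib]
  refine prod_le_prod (fun j _ => by have := hτ j; positivity) fun j hj => ?_
  have hpos : 0 < 1 - x * τ j := sub_pos.2 (hz1 j hj)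
  have hle := rpow_mul_exp_entH_le_one (ha j) (hz j) (hz1 j hj) fun h =>
    hsupp j ((mul_eq_zero.1 h).resolve_left hx.ne')
  rw [Real.mul_rpow hx.le (hτ j)] at hle
  rw [← one_div, le_div_iff₀ hpos]
  linarith

end CompleteHomogeneous

section ContingencyTables

variable {I J : Type*} [Fintype I] [Fintype J]

theorem prod_mul_pow_eq (τ : I → J → ℝ) (c : J → ℝ) (B : I → J → ℕ) :
    ∏ i, ∏ j, (τ i j * c j) ^ B i j =
      (∏ i, ∏ j, τ i j ^ B i j) * ∏ j, c j ^ ∑ i, B i j := by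
  simp only [mul_pow, prod_mul_distrib, ← prod_pow_eq_pow_sum]
  rw [prod_comm (f := fun i j => c j ^ B i j)]

theorem prod_mul_rpow_eq {τ : I → J → ℝ} {c : J → ℝ} (hτ : ∀ i j, 0 ≤ τ i j) (hc : ∀ j, 0 < c j)
    (a : I → J → ℝ) :
    ∏ i, ∏ j, (τ i j * c j) ^ a i j =
      (∏ i, ∏ j, τ i j ^ a i j) * ∏ j, c j ^ ∑ i, a i j := by
  simp only [Real.mul_rpow (hτ _ _) (hc _).le, prod_mul_distrib, Real.rpow_sum_of_pos (hc _)]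
  rw [prod_comm (f := fun i j => c j ^ a i j)]

variable [DecidableEq I] [DecidableEq J]
  {α : I → ℕ} {β : J → ℕ} {U : Finset J} {v : J}

/-- The matrices of natural numbers with row sums `α` in which each column `j ∈ U` has sum `β j`. -/
def contingencyTables (α : I → ℕ) (β : J → ℕ) (U : Finset J) : Finset (I → J → ℕ) :=
  {B ∈ Fintype.piFinset fun i => piAntidiag univ (α i) | ∀ j ∈ U, ∑ i, B i j = β j}

theorem mem_contingencyTables {B : I → J → ℕ} :
    B ∈ contingencyTables α β U ↔ (∀ i, ∑ j, B i j = α i) ∧ ∀ j ∈ U, ∑ i, B i j = β j := by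
  simp [contingencyTables]

theorem contingencyTables_empty :
    contingencyTables α β ∅ = Fintype.piFinset fun i => piAntidiag univ (α i) := by
  simp [contingencyTables]

theorem contingencyTables_insert_update (hv : v ∉ U) (k : ℕ) :
    contingencyTables α (Function.update β v k) (insert v U) =
      {B ∈ contingencyTables α β U | ∑ i, B i v = k} := by
  ext B
  have hU : (∀ j ∈ U, ∑ i, B i j = Function.update β v k j) ↔ ∀ j ∈ U, ∑ i, B i j = β j :=
    forall₂_congr fun j hj => by rw [Function.update_of_ne (ne_of_mem_of_not_mem hj hv)]
  rw [mem_filter, mem_contingencyTables, mem_contingencyTables, forall_mem_insert,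
    Function.update_self, hU]
  tauto

theorem contingencyTables_univ_erase (hαβ : ∑ i, α i = ∑ j, β j) (v : J) :
    contingencyTables α β (univ.erase v) = contingencyTables α β univ := by
  ext B
  simp only [mem_contingencyTables]
  refine and_congr_right fun hrow =>
    ⟨fun hcol j _ => ?_, fun hcol j _ => hcol j (mem_univ j)⟩
  rcases eq_or_ne j v with rfl | hj
  · have htotal : ∑ j, ∑ i, B i j = ∑ j, β j := by
      rw [Finset.sum_comm, ← hαβ, sum_congr rfl fun i _ => hrow i]
    rw [← add_sum_erase _ _ (mem_univ j), ← add_sum_erase _ β (mem_univ j),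
      sum_congr rfl hcol] at htotal
    exact Nat.add_right_cancel htotal
  · exact hcol j (mem_erase.2 ⟨hj, mem_univ j⟩)

theorem sum_smul_axisStep_sub_axisStep (B : I → J → ℕ) (U : Finset J) :
    ∑ x : I × J, B x.1 x.2 • (axisStep (if x.2 ∈ U then some (Sum.inr x.2) else none) -
      axisStep (some (Sum.inl x.1)) : I ⊕ J → ℤ) =
      Sum.elim (fun i => -((∑ j, B i j : ℕ) : ℤ))
        fun j => if j ∈ U then ((∑ i, B i j : ℕ) : ℤ) else 0 := by
  have haxis (x : I × J) : (axisStep (if x.2 ∈ U then some (Sum.inr x.2) else none) -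
      axisStep (some (Sum.inl x.1)) : I ⊕ J → ℤ) =
      Sum.elim (-Pi.single x.1 1) fun j => if j ∈ U then Pi.single x.2 1 j else 0 := by
    ext (i | j) <;> rcases x with ⟨i', j'⟩ <;> by_cases hj' : j' ∈ U <;>
      simp [axisStep, hj', Pi.single_apply] <;> grind
  ext (i | j)
  · simp only [haxis, Finset.sum_apply, Fintype.sum_prod_type]
    simp [Pi.single_apply]
  · simp only [haxis, Finset.sum_apply, Fintype.sum_prod_type, Pi.smul_apply, Sum.elim_inr]
    split_ifs with hj <;> simp [Pi.single_apply]

theorem sum_contingencyTables_eq_sum_boundaryFiber (α : I → ℕ) (β : J → ℕ) (U : Finset J)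
    (τ : I → J → ℝ) :
    ∑ B ∈ contingencyTables α β U, ∏ i, ∏ j, τ i j ^ B i j =
      ∑ B ∈ boundaryFiber (fun x => some (Sum.inl x.1))
        (fun x => if x.2 ∈ U then some (Sum.inr x.2) else none) (∑ i, α i)
        (Sum.elim (fun i => -(α i : ℤ)) fun j => if j ∈ U then (β j : ℤ) else 0),
        ∏ x : I × J, τ x.1 x.2 ^ B x := by
  refine sum_equiv (Equiv.curry I J ℕ).symm (fun B => ?_) fun B _ => by
    rw [Fintype.prod_prod_type]; rfl
  have hentry : (Equiv.curry I J ℕ).symm B ∈ Fintype.piFinset (fun _ => range (∑ i, α i + 1)) ↔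
      ∀ i j, B i j ≤ ∑ i, α i := by
    simp [Fintype.mem_piFinset]
  have hrow (hB : ∀ i, ∑ j, B i j = α i) (i : I) (j : J) : B i j ≤ ∑ i, α i :=
    ((single_le_sum (fun _ _ => Nat.zero_le _) (mem_univ j)).trans (hB i).le).trans
      (single_le_sum (fun _ _ => Nat.zero_le _) (mem_univ i))
  have hbdry := sum_smul_axisStep_sub_axisStep B U
  rw [boundaryFiber, mem_filter, mem_contingencyTables, hentry]
  change _ ↔ _ ∧ ∑ x : I × J, B x.1 x.2 • _ = _
  rw [hbdry, Sum.elim_eq_iff, funext_iff, funext_iff]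
  have hrow_eq : (∀ i, -((∑ j, B i j : ℕ) : ℤ) = -(α i : ℤ)) ↔ ∀ i, ∑ j, B i j = α i :=
    forall_congr' fun i => by rw [neg_inj, Nat.cast_inj]
  have hcol_eq : (∀ j, (if j ∈ U then ((∑ i, B i j : ℕ) : ℤ) else 0) =
      if j ∈ U then (β j : ℤ) else 0) ↔ ∀ j ∈ U, ∑ i, B i j = β j :=
    forall_congr' fun j => by
      split_ifs with hj <;> simp only [hj, Nat.cast_inj, true_imp_iff, false_imp_iff]
  rw [hrow_eq, hcol_eq]
  exact ⟨fun h => ⟨hrow h.1, h⟩, fun h => h.2⟩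

theorem isLogConcaveLimit_sum_contingencyTables (α : I → ℕ) (β : J → ℕ) (hv : v ∈ U)
    {τ : I → J → ℝ} (hτ : ∀ i j, 0 ≤ τ i j) :
    IsLogConcaveLimit fun k =>
      ∑ B ∈ contingencyTables α (Function.update β v k) U, ∏ i, ∏ j, τ i j ^ B i j := by
  obtain ⟨p, hp⟩ : ∃ p : I ⊕ J → ℤ, ∀ k : ℕ, (Sum.elim (fun i => -(α i : ℤ)) fun j =>
      if j ∈ U then (Function.update β v k j : ℤ) else 0) =
        p + k • Pi.single (Sum.inr v) 1 := by
    refine ⟨Sum.elim (fun i => -(α i : ℤ)) fun j =>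
      if j ∈ U then (Function.update β v 0 j : ℤ) else 0, fun k => ?_⟩
    ext (i | j)
    · simp
    · rcases eq_or_ne j v with rfl | hj
      · simp [hv]
      · simp [hj]
  simp_rw [sum_contingencyTables_eq_sum_boundaryFiber, hp]
  exact isLogConcaveLimit_sum_boundaryFiber _ _ (fun x : I × J => hτ x.1 x.2) _ _ _

theorem hasSum_sum_contingencyTables_mul_pow (α : I → ℕ) (β : J → ℕ) (hv : v ∉ U)
    (τ : I → J → ℝ) (x : ℝ) :
    HasSum (fun k => (∑ B ∈ contingencyTables α (Function.update β v k) (insert v U),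
      ∏ i, ∏ j, τ i j ^ B i j) * x ^ k)
      (∑ B ∈ contingencyTables α β U, ∏ i, ∏ j, (τ i j * if j = v then x else 1) ^ B i j) := by
  have hscale (B : I → J → ℕ) : ∏ i, ∏ j, (τ i j * if j = v then x else 1) ^ B i j =
      (∏ i, ∏ j, τ i j ^ B i j) * x ^ ∑ i, B i v := by
    rw [prod_mul_pow_eq, Fintype.prod_eq_single v fun j hj => by simp [hj], if_pos rfl]
  simp only [contingencyTables_insert_update hv, sum_filter, sum_mul, ite_mul, zero_mul, hscale]
  refine hasSum_sum fun B _ => ?_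
  convert hasSum_ite_eq (∑ i, B i v) ((∏ i, ∏ j, τ i j ^ B i j) * x ^ ∑ i, B i v) using 2 with k
  grind

theorem prod_rpow_mul_exp_entH_le_sum_contingencyTables {a τ : I → J → ℝ}
    (ha : ∀ i j, 0 ≤ a i j) (hτ : ∀ i j, 0 ≤ τ i j) (hsupp : ∀ i j, τ i j = 0 → a i j = 0)
    (hα : ∀ i, ∑ j, a i j = α i) (hβ : ∀ j ∈ U, ∑ i, a i j = β j) :
    (∏ i, ∏ j, τ i j ^ a i j) * ∏ i, ∏ j, Real.exp (entH (a i j)) ≤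
      (∑ B ∈ contingencyTables α β U, ∏ i, ∏ j, τ i j ^ B i j) *
        ((∏ i, Real.exp (entH (α i))) * ∏ j ∈ U, Real.exp (entH (β j))) := by
  induction U using Finset.induction_on generalizing τ with
  | empty =>
    rw [contingencyTables_empty, prod_empty, mul_one,
      ← prod_univ_sum _ fun i (b : J → ℕ) => ∏ j, τ i j ^ b j, ← prod_mul_distrib,
      ← prod_mul_distrib]
    simp only [← prod_mul_distrib]
    refine prod_le_prod (fun i _ => prod_nonneg fun j _ => by have := hτ i j; positivity)
      fun i _ => ?_
    exact prod_rpow_mul_exp_entH_le_completeHomogeneous (hτ i) (ha i) (hsupp i) (hα i)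
  | insert v U hv ih =>
    have hlc := isLogConcaveLimit_sum_contingencyTables α β (mem_insert_self v U) hτ
    set D := (∏ i, Real.exp (entH (α i))) * ∏ j ∈ U, Real.exp (entH (β j)) with hD
    rw [prod_insert hv, mul_left_comm (∏ i, _), ← hD, ← mul_assoc, ← div_le_iff₀ (by positivity)]
    have hcap := hlc.le_mul_exp_entH (β := β v) (C := (∏ i, ∏ j, τ i j ^ a i j) *
      (∏ i, ∏ j, Real.exp (entH (a i j))) / D) fun x hx M hM => ?_
    · simpa only [Function.update_eq_self] using hcap
    have hc (j : J) : 0 < if j = v then x else 1 := by positivity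
    have hx := ih (τ := fun i j => τ i j * if j = v then x else 1)
      (fun i j => mul_nonneg (hτ i j) (hc j).le)
      (fun i j h => hsupp i j ((mul_eq_zero.1 h).resolve_right (hc j).ne'))
      fun j hj => hβ j (mem_insert_of_mem hj)
    rw [hM.unique (hasSum_sum_contingencyTables_mul_pow α β hv τ x), div_mul_eq_mul_div,
      div_le_iff₀ (by positivity)]
    rw [prod_mul_rpow_eq hτ hc, Fintype.prod_eq_single v fun j hj => by simp [hj], if_pos rfl,
      hβ v (mem_insert_self v U), Real.rpow_natCast] at hx
    linarith

theorem prod_exp_entH_mul_le_card_contingencyTables {a : I → J → ℝ} (ha : ∀ i j, 0 ≤ a i j)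
    (G : I → J → Prop) [∀ i j, Decidable (G i j)] (hsupp : ∀ i j, ¬ G i j → a i j = 0)
    (hα : ∀ i, ∑ j, a i j = α i) (hβ : ∀ j, ∑ i, a i j = β j) (v : J) :
    (∏ i, ∏ j, Real.exp (entH (a i j))) * Real.exp (entH (β v)) ≤
      #{B ∈ contingencyTables α β univ | ∀ i j, ¬ G i j → B i j = 0} *
        ((∏ i, Real.exp (entH (α i))) * ∏ j, Real.exp (entH (β j))) := by
  have hαβ : ∑ i, α i = ∑ j, β j := by
    have hreal : (∑ i, (α i : ℝ)) = ∑ j, (β j : ℝ) := by simp only [← hα, ← hβ]; exact sum_comm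
    exact_mod_cast hreal
  have hcap := prod_rpow_mul_exp_entH_le_sum_contingencyTables (U := univ.erase v)
    (τ := fun i j => if G i j then 1 else 0) ha (fun i j => by positivity)
    (fun i j h => hsupp i j (by simpa using h)) hα fun j _ => hβ j
  have hone (i : I) (j : J) : (if G i j then (1 : ℝ) else 0) ^ a i j = 1 := by
    split_ifs with h
    · exact Real.one_rpow _
    · rw [hsupp i j h, Real.rpow_zero]
  have hindicator (B : I → J → ℕ) : ∏ i, ∏ j, (if G i j then (1 : ℝ) else 0) ^ B i j =
      if ∀ i j, ¬ G i j → B i j = 0 then 1 else 0 := by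
    have hentry (i : I) (j : J) : (if G i j then (1 : ℝ) else 0) ^ B i j =
        if ¬ G i j → B i j = 0 then 1 else 0 := by
      rw [ite_pow, one_pow, zero_pow_eq]
      grind
    simp only [hentry, Fintype.prod_boole]
  simp only [hone, prod_const_one, one_mul, hindicator, sum_boole,
    contingencyTables_univ_erase hαβ] at hcap
  rw [← prod_erase_mul univ _ (mem_univ v), ← mul_assoc, ← mul_assoc]
  rw [← mul_assoc] at hcap
  gcongr

end ContingencyTables

section MaximumEntropy

variable {E : Type*} [Fintype E]

theorem sum_prod_pow_mul_one_sub_le_one {t : E → ℝ} (ht : ∀ e, 0 ≤ t e) (ht1 : ∀ e, t e < 1)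
    (S : Finset (E → ℕ)) : ∑ B ∈ S, ∏ e, (t e ^ B e * (1 - t e)) ≤ 1 := by
  classical
  have hnonneg (e : E) (k : ℕ) : 0 ≤ t e ^ k * (1 - t e) :=
    mul_nonneg (pow_nonneg (ht e) k) (sub_nonneg.2 (ht1 e).le)
  have hgeom (e : E) : HasSum (fun k => t e ^ k * (1 - t e)) 1 := by
    simpa [(sub_pos.2 (ht1 e)).ne'] using
      (hasSum_geometric_of_lt_one (ht e) (ht1 e)).mul_right (1 - t e)
  have hsub : S ⊆ Fintype.piFinset fun e => S.image (· e) := fun B hB =>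
    Fintype.mem_piFinset.2 fun e => mem_image_of_mem _ hB
  calc ∑ B ∈ S, ∏ e, (t e ^ B e * (1 - t e))
      ≤ ∑ B ∈ Fintype.piFinset fun e => S.image (· e), ∏ e, (t e ^ B e * (1 - t e)) :=
        sum_le_sum_of_subset_of_nonneg hsub fun B _ _ => prod_nonneg fun e _ => hnonneg e _
    _ = ∏ e, ∑ k ∈ S.image (· e), t e ^ k * (1 - t e) :=
        (prod_univ_sum (fun e => S.image (· e)) fun e k => t e ^ k * (1 - t e)).symm
    _ ≤ 1 := prod_le_one (fun e _ => sum_nonneg fun k _ => hnonneg e k) fun e _ =>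
        sum_le_hasSum _ (fun k _ => hnonneg e k) (hgeom e)

/-- The uniform distribution on `S` has entropy `log #S`, which is at most that of the product of
the geometric distributions with the same means. -/
theorem card_le_exp_sum_entH_mean {S : Finset (E → ℕ)} (hS : S.Nonempty) :
    (#S : ℝ) ≤ Real.exp (∑ e, entH ((∑ B ∈ S, (B e : ℝ)) / #S)) := by
  set m : E → ℝ := fun e => (∑ B ∈ S, (B e : ℝ)) / #S
  let t : E → ℝ := fun e => m e / (m e + 1)
  have hcard : (0 : ℝ) < #S := by exact_mod_cast hS.card_pos
  have hm (e : E) : 0 ≤ m e := by positivity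
  have ht (e : E) : 0 ≤ t e := by have := hm e; positivity
  have ht1 (e : E) : t e < 1 := (div_lt_one (by linarith [hm e])).2 (lt_add_one _)
  have hfactor (e : E) (k : ℕ) : 0 ≤ t e ^ k * (1 - t e) :=
    mul_nonneg (pow_nonneg (ht e) k) (sub_nonneg.2 (ht1 e).le)
  have hgeom (e : E) :
      ∏ B ∈ S, (t e ^ B e * (1 - t e)) ^ (#S : ℝ)⁻¹ = Real.exp (-entH (m e)) := by
    have hopt := rpow_mul_exp_entH_eq_one (hm e)
    rw [Real.finsetProd_rpow _ _ fun B _ => hfactor e (B e), prod_mul_distrib, prod_const,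
      prod_pow_eq_pow_sum,
      Real.mul_rpow (pow_nonneg (ht e) _) (pow_nonneg (sub_nonneg.2 (ht1 e).le) _),
      Real.pow_rpow_inv_natCast (sub_nonneg.2 (ht1 e).le) hS.card_pos.ne',
      ← Real.rpow_natCast, ← Real.rpow_mul (ht e), Real.exp_neg]
    push_cast
    rw [← div_eq_mul_inv]
    exact eq_inv_of_mul_eq_one_left hopt
  have hamgm := Real.geom_mean_le_arith_mean_weighted S (fun _ => (#S : ℝ)⁻¹)
    (fun B => ∏ e, (t e ^ B e * (1 - t e))) (fun _ _ => by positivity)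
    (by simp [hcard.ne']) fun B _ => prod_nonneg fun e _ => hfactor e (B e)
  simp only [← Real.finsetProd_rpow _ _ fun e _ => hfactor e _] at hamgm
  rw [Finset.prod_comm, prod_congr rfl fun e _ => hgeom e, ← Real.exp_sum, sum_neg_distrib,
    Real.exp_neg, ← mul_sum] at hamgm
  exact (inv_le_inv₀ (Real.exp_pos _) hcard).1 <| hamgm.trans <|
    mul_le_of_le_one_right (by positivity) (sum_prod_pow_mul_one_sub_le_one ht ht1 S)

end MaximumEntropy

section Flows

variable {V : Type*} [LinearOrder V]

/-- The matrix `g` with its diagonal replaced by zero; it recovers a flow from its table. -/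
def offDiagonal {R : Type*} [Zero R] (g : V → V → R) (u v : V) : R :=
  if u = v then 0 else g u v

theorem natCast_offDiagonal (B : V → V → ℕ) :
    (fun u v => ((offDiagonal B u v : ℕ) : ℝ)) = offDiagonal fun u v => (B u v : ℝ) := by
  funext u v
  simp only [offDiagonal, Nat.cast_ite, Nat.cast_zero]

variable [Fintype V]

/-- The netflow (outflow minus inflow) of `f` at each vertex. -/
def netflow {R : Type*} [AddCommGroup R] (f : V → V → R) (v : V) : R :=
  ∑ j, f v j - ∑ i, f i v

/-- The upper triangular matrix attached to a flow `f`: off the diagonal it is `f`, and its entry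
at `(v, v)` is the amount of flow bypassing `v`, on the edges from before `v` to after `v`. -/
def flowTable {R : Type*} [AddCommMonoid R] (f : V → V → R) (u v : V) : R :=
  if u = v then ∑ i with i < v, ∑ j with v < j, f i j else f u v

/-- The nonnegative upper triangular matrices whose row and column sums are the partial sums of
`N`. These are the tables of the flows with netflow `N`. -/
structure IsFlowTable (N : V → ℝ) (g : V → V → ℝ) : Prop where
  nonneg : ∀ u v, 0 ≤ g u v
  eq_zero_of_not_le : ∀ u v, ¬ u ≤ v → g u v = 0
  row_sum : ∀ u, ∑ j, g u j = ∑ i with i ≤ u, N i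
  col_sum : ∀ v, ∑ i, g i v = ∑ i with i < v, N i

section Netflow

variable {R : Type*} [AddCommGroup R] {f : V → V → R}

theorem sum_netflow_lt (hf : ∀ i j, ¬ i < j → f i j = 0) (v : V) :
    ∑ i with i < v, netflow f i = ∑ i with i < v, ∑ j with v ≤ j, f i j := by
  have hin : ∑ i with i < v, ∑ k, f k i = ∑ i with i < v, ∑ j with j < v, f i j := by
    rw [Finset.sum_comm]
    refine (sum_filter_of_ne fun k _ hk => ?_).symm
    obtain ⟨i, hi, hki⟩ := exists_ne_zero_of_sum_ne_zero hk
    exact (not_imp_comm.1 (hf k i) hki).trans (mem_filter.1 hi).2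
  simp only [netflow]
  rw [sum_sub_distrib, hin, ← sum_sub_distrib]
  refine sum_congr rfl fun i _ => ?_
  rw [← sum_filter_add_sum_filter_not univ (· < v), add_sub_cancel_left]
  simp only [not_lt]

theorem flowTable_self (hf : ∀ i j, ¬ i < j → f i j = 0) (v : V) :
    flowTable f v v = ∑ i with i < v, (netflow f i - f i v) := by
  rw [sum_sub_distrib, sum_netflow_lt hf, ← sum_sub_distrib, flowTable, if_pos rfl]
  refine sum_congr rfl fun i _ => ?_
  rw [show univ.filter (v ≤ ·) = insert v (univ.filter (v < ·)) by
    ext j; simp [le_iff_eq_or_lt, eq_comm], sum_insert (by simp), add_sub_cancel_left]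

theorem flowTable_eq_add (hf : ∀ v, f v v = 0) (u v : V) :
    flowTable f u v = f u v + if u = v then flowTable f v v else 0 := by
  split_ifs with h
  · rw [h, hf, zero_add]
  · rw [flowTable, if_neg h, add_zero]

theorem sum_flowTable_col (hf : ∀ i j, ¬ i < j → f i j = 0) (v : V) :
    ∑ i, flowTable f i v = ∑ i with i < v, netflow f i := by
  have hinflow : ∑ i with i < v, f i v = ∑ i, f i v :=
    sum_filter_of_ne fun i _ => not_imp_comm.1 (hf i v)
  rw [sum_congr rfl fun i _ => flowTable_eq_add (fun u => hf u u (lt_irrefl u)) i v,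
    sum_add_distrib, sum_ite_eq' univ v fun _ => flowTable f v v, if_pos (mem_univ v),
    flowTable_self hf, sum_sub_distrib, hinflow, add_sub_cancel]

theorem sum_le_eq_add_sum_lt (N : V → R) (u : V) :
    ∑ i with i ≤ u, N i = N u + ∑ i with i < u, N i := by
  rw [show univ.filter (· ≤ u) = insert u (univ.filter (· < u)) by
    ext i; simp [le_iff_eq_or_lt], sum_insert (by simp)]

theorem sum_flowTable_row (hf : ∀ i j, ¬ i < j → f i j = 0) (u : V) :
    ∑ j, flowTable f u j = ∑ i with i ≤ u, netflow f i := by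
  have hdiag (v : V) : f v v = 0 := hf v v (lt_irrefl v)
  rw [sum_le_eq_add_sum_lt, ← sum_flowTable_col hf, netflow,
    sum_congr rfl fun j _ => flowTable_eq_add hdiag u j,
    sum_congr rfl fun i _ => flowTable_eq_add hdiag i u]
  simp only [sum_add_distrib, sum_ite_eq, sum_ite_eq', mem_univ, if_true]
  abel

theorem netflow_offDiagonal (g : V → V → R) : netflow (offDiagonal g) = netflow g := by
  have hoff (u v : V) : offDiagonal g u v = g u v - if u = v then g u v else 0 := by
    unfold offDiagonal
    split_ifs <;> simp
  funext v
  simp only [netflow, hoff, sum_sub_distrib, sum_ite_eq, sum_ite_eq', mem_univ, if_true,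
    sub_sub_sub_cancel_right]

end Netflow

theorem offDiagonal_flowTable {R : Type*} [AddCommMonoid R] {f : V → V → R}
    (hf : ∀ v, f v v = 0) : offDiagonal (flowTable f) = f := by
  funext u v
  by_cases h : u = v
  · rw [offDiagonal, if_pos h, h, hf]
  · rw [offDiagonal, if_neg h, flowTable, if_neg h]

theorem natCast_flowTable (f : V → V → ℕ) :
    (fun u v => ((flowTable f u v : ℕ) : ℝ)) = flowTable fun u v => (f u v : ℝ) := by
  funext u v
  simp only [flowTable, Nat.cast_ite, Nat.cast_sum]

theorem isFlowTable_flowTable {f : V → V → ℝ} (hf₀ : ∀ i j, 0 ≤ f i j)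
    (hf : ∀ i j, ¬ i < j → f i j = 0) : IsFlowTable (netflow f) (flowTable f) where
  nonneg u v := by
    unfold flowTable
    split_ifs
    · exact sum_nonneg fun i _ => sum_nonneg fun j _ => hf₀ i j
    · exact hf₀ u v
  eq_zero_of_not_le u v h := by
    rw [flowTable, if_neg (ne_of_not_le h), hf u v (mt le_of_lt h)]
  row_sum := sum_flowTable_row hf
  col_sum := sum_flowTable_col hf

namespace IsFlowTable

variable {N : V → ℝ} {g : V → V → ℝ}

theorem offDiagonal_nonneg (hg : IsFlowTable N g) (u v : V) : 0 ≤ offDiagonal g u v := by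
  unfold offDiagonal
  split_ifs
  exacts [le_rfl, hg.nonneg u v]

theorem offDiagonal_eq_zero (hg : IsFlowTable N g) {u v : V} (h : ¬ u < v) :
    offDiagonal g u v = 0 := by
  unfold offDiagonal
  split_ifs with huv
  exacts [rfl, hg.eq_zero_of_not_le u v fun hle => h (hle.lt_of_ne huv)]

theorem netflow_offDiagonal_eq (hg : IsFlowTable N g) : netflow (offDiagonal g) = N := by
  rw [netflow_offDiagonal]
  funext v
  rw [netflow, hg.row_sum, hg.col_sum, sum_le_eq_add_sum_lt, add_sub_cancel_right]

/-- The off-diagonal entries determine the diagonal ones through the column sums. -/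
theorem flowTable_offDiagonal (hg : IsFlowTable N g) : flowTable (offDiagonal g) = g := by
  have hoff {u v : V} (h : u ≠ v) : flowTable (offDiagonal g) u v = g u v := by
    rw [flowTable, if_neg h, offDiagonal, if_neg h]
  have hcol (v : V) : ∑ i, flowTable (offDiagonal g) i v = ∑ i, g i v := by
    rw [sum_flowTable_col fun i j => hg.offDiagonal_eq_zero, hg.netflow_offDiagonal_eq, hg.col_sum]
  funext u v
  rcases ne_or_eq u v with h | rfl
  · exact hoff h
  · have hsum := hcol u
    rw [← add_sum_erase univ _ (mem_univ u), ← add_sum_erase univ _ (mem_univ u),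
      sum_congr rfl fun i hi => hoff (ne_of_mem_erase hi)] at hsum
    exact add_right_cancel hsum

theorem mean {S : Finset (V → V → ℕ)} (hS : S.Nonempty)
    (h : ∀ B ∈ S, IsFlowTable N fun u v => (B u v : ℝ)) :
    IsFlowTable N fun u v => (∑ B ∈ S, (B u v : ℝ)) / #S where
  nonneg u v := by positivity
  eq_zero_of_not_le u v huv := by
    rw [sum_eq_zero fun B hB => (h B hB).eq_zero_of_not_le u v huv, zero_div]
  row_sum u := by
    rw [← sum_div, Finset.sum_comm, sum_congr rfl fun B hB => (h B hB).row_sum u, sum_const,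
      nsmul_eq_mul, mul_div_cancel_left₀ _ (by exact_mod_cast hS.card_ne_zero)]
  col_sum v := by
    rw [← sum_div, Finset.sum_comm, sum_congr rfl fun B hB => (h B hB).col_sum v, sum_const,
      nsmul_eq_mul, mul_div_cancel_left₀ _ (by exact_mod_cast hS.card_ne_zero)]

end IsFlowTable

section IntegerTables

variable {N : V → ℤ}

/-- The flow tables with entries in `ℕ`, described as contingency tables. The row and column sums
are `toNat`s of partial sums of `N`, so this is meaningful only when those are nonnegative. -/
def integerFlowTables (N : V → ℤ) : Finset (V → V → ℕ) :=
  {B ∈ contingencyTables (fun u => (∑ i with i ≤ u, N i).toNat)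
    (fun v => (∑ i with i < v, N i).toNat) univ | ∀ u v, ¬ u ≤ v → B u v = 0}

theorem IsFlowTable.toNat_row_sum {a : V → V → ℝ} (ha : IsFlowTable (fun i => (N i : ℝ)) a)
    (u : V) : ((∑ i with i ≤ u, N i).toNat : ℝ) = ∑ j, a u j := by
  have hrow : ((∑ i with i ≤ u, N i : ℤ) : ℝ) = ∑ j, a u j := by
    rw [ha.row_sum, Int.cast_sum]
  have hnonneg : 0 ≤ ∑ i with i ≤ u, N i := by
    exact_mod_cast hrow ▸ sum_nonneg fun j _ => ha.nonneg u j
  rw [← hrow, ← Int.cast_natCast, Int.toNat_of_nonneg hnonneg]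

theorem IsFlowTable.toNat_col_sum {a : V → V → ℝ} (ha : IsFlowTable (fun i => (N i : ℝ)) a)
    (v : V) : ((∑ i with i < v, N i).toNat : ℝ) = ∑ i, a i v := by
  have hcol : ((∑ i with i < v, N i : ℤ) : ℝ) = ∑ i, a i v := by
    rw [ha.col_sum, Int.cast_sum]
  have hnonneg : 0 ≤ ∑ i with i < v, N i := by
    exact_mod_cast hcol ▸ sum_nonneg fun i _ => ha.nonneg i v
  rw [← hcol, ← Int.cast_natCast, Int.toNat_of_nonneg hnonneg]

theorem IsFlowTable.mem_integerFlowTables {a : V → V → ℝ}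
    (ha : IsFlowTable (fun i => (N i : ℝ)) a) {B : V → V → ℕ} :
    B ∈ integerFlowTables N ↔ IsFlowTable (fun i => (N i : ℝ)) fun u v => (B u v : ℝ) := by
  have hrow (u : V) : ∑ j, B u j = (∑ i with i ≤ u, N i).toNat ↔
      ∑ j, (B u j : ℝ) = ∑ i with i ≤ u, (N i : ℝ) := by
    rw [← ha.row_sum, ← ha.toNat_row_sum, ← Nat.cast_sum, Nat.cast_inj]
  have hcol (v : V) : ∑ i, B i v = (∑ i with i < v, N i).toNat ↔
      ∑ i, (B i v : ℝ) = ∑ i with i < v, (N i : ℝ) := by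
    rw [← ha.col_sum, ← ha.toNat_col_sum, ← Nat.cast_sum, Nat.cast_inj]
  simp only [integerFlowTables, mem_filter, mem_contingencyTables, hrow, hcol, mem_univ,
    true_implies]
  exact ⟨fun h => ⟨fun _ _ => Nat.cast_nonneg _, fun u v huv => by simp [h.2 u v huv], h.1.1,
    h.1.2⟩, fun h => ⟨⟨h.row_sum, h.col_sum⟩, fun u v huv =>
    Nat.cast_eq_zero.1 (h.eq_zero_of_not_le u v huv)⟩⟩

theorem IsFlowTable.prod_exp_entH_mul_le {a : V → V → ℝ}
    (ha : IsFlowTable (fun i => (N i : ℝ)) a) (w : V) :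
    Real.exp (∑ u, ∑ v, entH (a u v)) * Real.exp (entH (∑ i, a i w)) ≤
      #(integerFlowTables N) * ((∏ u, Real.exp (entH (∑ j, a u j))) *
        ∏ v, Real.exp (entH (∑ i, a i v))) := by
  have hle := prod_exp_entH_mul_le_card_contingencyTables ha.nonneg (· ≤ ·)
    ha.eq_zero_of_not_le (fun u => (ha.toNat_row_sum u).symm)
    (fun v => (ha.toNat_col_sum v).symm) w
  simp only [Real.exp_sum, ← ha.toNat_row_sum, ← ha.toNat_col_sum]
  exact hle

theorem card_integerFlowTables_le {a : V → V → ℝ} (ha : IsFlowTable (fun i => (N i : ℝ)) a)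
    (hne : (integerFlowTables N).Nonempty) :
    ∃ b, IsFlowTable (fun i => (N i : ℝ)) b ∧
      (#(integerFlowTables N) : ℝ) ≤ Real.exp (∑ u, ∑ v, entH (b u v)) := by
  refine ⟨_, IsFlowTable.mean hne fun B hB => ha.mem_integerFlowTables.1 hB, ?_⟩
  have hle := card_le_exp_sum_entH_mean
    (hne.map (f := (Equiv.curry V V ℕ).symm.toEmbedding))
  simp only [card_map, sum_map, Fintype.sum_prod_type] at hle
  exact hle

end IntegerTables

end Flows

section CompleteGraph

variable {n : ℕ}

theorem mem_flowPolytope_iff {N : Fin (n + 1) → ℝ} {f : Fin (n + 1) → Fin (n + 1) → ℝ} :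
    f ∈ FlowPolytope n N ↔
      (∀ i j, 0 ≤ f i j) ∧ (∀ i j, ¬ i < j → f i j = 0) ∧ netflow f = N := by
  have hnet (hf : ∀ i j, ¬ i < j → f i j = 0) (v : Fin (n + 1)) :
      (∑ j, if v < j then f v j else 0) - (∑ k, if k < v then f k v else 0) = netflow f v := by
    rw [netflow]
    congr 1 <;> exact sum_congr rfl fun i _ => ite_eq_left_iff.2 fun h => (hf _ _ h).symm
  constructor
  · rintro ⟨hpos, hsupp, hN⟩
    refine ⟨fun i j => ?_, hsupp, funext fun v => (hnet hsupp v).symm.trans (hN v)⟩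
    by_cases h : i < j
    exacts [hpos i j h, (hsupp i j h).ge]
  · rintro ⟨hpos, hsupp, rfl⟩
    exact ⟨fun i j _ => hpos i j, hsupp, hnet hsupp⟩

theorem isIntFlow_iff {N : Fin (n + 1) → ℤ} {f : Fin (n + 1) → Fin (n + 1) → ℕ} :
    IsIntFlow n N f ↔ (fun i j => (f i j : ℝ)) ∈ FlowPolytope n fun i => (N i : ℝ) := by
  have hnet (v : Fin (n + 1)) :
      (∑ j, if v < j then (f v j : ℝ) else 0) - (∑ k, if k < v then (f k v : ℝ) else 0) = N v ↔
      (∑ j, if v < j then (f v j : ℤ) else 0) - (∑ k, if k < v then (f k v : ℤ) else 0) = N v := by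
    rw [← Int.cast_inj (α := ℝ)]
    push_cast
    rfl
  simp [IsIntFlow, FlowPolytope, hnet]

theorem isFlowTable_flowTable_of_mem {N : Fin (n + 1) → ℝ} {f : Fin (n + 1) → Fin (n + 1) → ℝ}
    (hf : f ∈ FlowPolytope n N) : IsFlowTable N (flowTable f) := by
  obtain ⟨hpos, hsupp, rfl⟩ := mem_flowPolytope_iff.1 hf
  exact isFlowTable_flowTable hpos hsupp

theorem IsFlowTable.offDiagonal_mem {N : Fin (n + 1) → ℝ} {g : Fin (n + 1) → Fin (n + 1) → ℝ}
    (hg : IsFlowTable N g) : offDiagonal g ∈ FlowPolytope n N :=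
  mem_flowPolytope_iff.2 ⟨hg.offDiagonal_nonneg, fun _ _ => hg.offDiagonal_eq_zero,
    hg.netflow_offDiagonal_eq⟩

theorem flowEntropy_eq {N : Fin (n + 1) → ℝ} {f : Fin (n + 1) → Fin (n + 1) → ℝ}
    (hf : f ∈ FlowPolytope n N) : flowEntropy n N f = ∑ u, ∑ v, entH (flowTable f u v) := by
  obtain ⟨-, hsupp, hN⟩ := mem_flowPolytope_iff.1 hf
  have hslack (v : Fin (n + 1)) :
      (∑ i, if i < v then N i - f i v else 0) = flowTable f v v := by
    rw [flowTable_self hsupp, hN, sum_filter]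
  have hends (v : Fin (n + 1)) (hv : ¬ (0 < (v : ℕ) ∧ (v : ℕ) < n)) :
      flowTable f v v = 0 := by
    rw [flowTable, if_pos rfl]
    refine sum_eq_zero fun i hi => sum_eq_zero fun j hj => (hv ?_).elim
    have hiv := (mem_filter.1 hi).2
    have hvj := (mem_filter.1 hj).2
    omega
  have hentry (u v : Fin (n + 1)) : entH (flowTable f u v) =
      (if u < v then entH (f u v) else 0) + if u = v then entH (flowTable f v v) else 0 := by
    rcases eq_or_ne u v with rfl | huv
    · simp
    · by_cases h : u < v <;> simp [flowTable, huv, h, hsupp, entH_zero]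
  rw [flowEntropy, sum_congr rfl fun u _ => sum_congr rfl fun v _ => hentry u v]
  simp only [sum_add_distrib, hslack, sum_ite_eq, mem_univ, if_true]
  congr 1
  refine sum_congr rfl fun v _ => ite_eq_left_iff.2 fun hv => ?_
  rw [hends v hv, entH_zero]

theorem Kn_eq_card_integerFlowTables {N : Fin (n + 1) → ℤ}
    (hne : (FlowPolytope n fun i => (N i : ℝ)).Nonempty) :
    Kn n N = #(integerFlowTables N) := by
  obtain ⟨f₀, hf₀⟩ := hne
  have hmem (B : Fin (n + 1) → Fin (n + 1) → ℕ) :=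
    (isFlowTable_flowTable_of_mem hf₀).mem_integerFlowTables (B := B)
  have hto (f : Fin (n + 1) → Fin (n + 1) → ℕ) (hf : IsIntFlow n N f) :
      flowTable f ∈ integerFlowTables N := by
    rw [hmem, natCast_flowTable]
    exact isFlowTable_flowTable_of_mem (isIntFlow_iff.1 hf)
  have hfrom (B : Fin (n + 1) → Fin (n + 1) → ℕ) (hB : B ∈ integerFlowTables N) :
      IsIntFlow n N (offDiagonal B) := by
    rw [isIntFlow_iff, natCast_offDiagonal]
    exact ((hmem B).1 hB).offDiagonal_mem
  have hright (B : Fin (n + 1) → Fin (n + 1) → ℕ) (hB : B ∈ integerFlowTables N) :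
      flowTable (offDiagonal B) = B := by
    have hcast := ((hmem B).1 hB).flowTable_offDiagonal
    rw [← natCast_offDiagonal, ← natCast_flowTable] at hcast
    funext u v
    exact Nat.cast_injective (congr_fun₂ hcast u v)
  rw [Kn, ← Nat.card_eq_finsetCard]
  exact Nat.card_congr
    { toFun := fun f => ⟨flowTable f.1, hto f.1 f.2⟩
      invFun := fun B => ⟨offDiagonal B.1, hfrom B.1 B.2⟩
      left_inv := fun f => Subtype.ext <| offDiagonal_flowTable fun v => f.2.1 v v (lt_irrefl v)
      right_inv := fun B => Subtype.ext <| hright B.1 B.2 }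

theorem cast_sPartial_eq_sum_le (N : Fin (n + 1) → ℤ) (k : Fin n) :
    (sPartial n N k : ℝ) = ∑ i with i ≤ k.castSucc, (N i : ℝ) := by
  rw [sPartial, ← sum_filter, Int.cast_sum]
  rfl

theorem cast_sPartial_eq_sum_lt (N : Fin (n + 1) → ℤ) (k : Fin n) :
    (sPartial n N k : ℝ) = ∑ i with i < k.succ, (N i : ℝ) := by
  simp only [sPartial, ← sum_filter, Int.cast_sum, Fin.lt_def, Fin.val_succ, Nat.lt_succ_iff]

section Tables

variable {N : Fin (n + 1) → ℤ} {a : Fin (n + 1) → Fin (n + 1) → ℝ}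

theorem IsFlowTable.prod_exp_entH_row (ha : IsFlowTable (fun i => (N i : ℝ)) a)
    (hN : ∑ i, N i = 0) : ∏ u, Real.exp (entH (∑ j, a u j)) =
      ∏ k ∈ range n, Real.exp (entH (sPartial n N k : ℝ)) := by
  have hlast : ∑ j, a (Fin.last n) j = 0 := by
    rw [ha.row_sum, filter_true_of_mem fun i _ => Fin.le_last i]
    exact_mod_cast hN
  rw [Fin.prod_univ_castSucc, hlast, entH_zero, Real.exp_zero, mul_one]
  simp only [ha.row_sum, ← cast_sPartial_eq_sum_le]
  exact Fin.prod_univ_eq_prod_range (fun k => Real.exp (entH (sPartial n N k : ℝ))) n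

theorem IsFlowTable.prod_exp_entH_col (ha : IsFlowTable (fun i => (N i : ℝ)) a) :
    ∏ v, Real.exp (entH (∑ i, a i v)) =
      ∏ k ∈ range n, Real.exp (entH (sPartial n N k : ℝ)) := by
  have hzero : ∑ i, a i 0 = 0 := by
    rw [ha.col_sum, filter_false_of_mem fun i _ => Fin.not_lt_zero i, sum_empty]
  rw [Fin.prod_univ_succ, hzero, entH_zero, Real.exp_zero, one_mul]
  simp only [ha.col_sum, ← cast_sPartial_eq_sum_lt]
  exact Fin.prod_univ_eq_prod_range (fun k => Real.exp (entH (sPartial n N k : ℝ))) n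

end Tables

section Bounds

variable {N : Fin (n + 1) → ℤ}

theorem exp_flowEntropy_mul_le (hN : ∑ i, N i = 0) {f : Fin (n + 1) → Fin (n + 1) → ℝ}
    (hf : f ∈ FlowPolytope n fun i => (N i : ℝ)) (v : Fin (n + 1)) :
    Real.exp (flowEntropy n (fun i => (N i : ℝ)) f) *
        Real.exp (entH (∑ i with i < v, (N i : ℝ))) ≤
      Kn n N * (∏ k ∈ range n, Real.exp (entH (sPartial n N k : ℝ))) ^ 2 := by
  have ha := isFlowTable_flowTable_of_mem hf
  have hle := ha.prod_exp_entH_mul_le v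
  rwa [ha.prod_exp_entH_row hN, ha.prod_exp_entH_col, ha.col_sum, ← sq, ← flowEntropy_eq hf,
    ← Kn_eq_card_integerFlowTables ⟨f, hf⟩] at hle

theorem bddAbove_exp_flowEntropy (hN : ∑ i, N i = 0) :
    BddAbove ((fun f => Real.exp (flowEntropy n (fun i => (N i : ℝ)) f)) ''
      FlowPolytope n fun i => (N i : ℝ)) := by
  refine ⟨Kn n N * (∏ k ∈ range n, Real.exp (entH (sPartial n N k : ℝ))) ^ 2, ?_⟩
  rintro _ ⟨f, hf, rfl⟩
  simpa [entH_zero] using exp_flowEntropy_mul_le hN hf 0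

theorem exists_Kn_le_exp_flowEntropy (hne : (FlowPolytope n fun i => (N i : ℝ)).Nonempty) :
    ∃ f ∈ FlowPolytope n fun i => (N i : ℝ),
      (Kn n N : ℝ) ≤ Real.exp (flowEntropy n (fun i => (N i : ℝ)) f) := by
  rw [Kn_eq_card_integerFlowTables hne]
  obtain ⟨f, hf⟩ := hne
  rcases (integerFlowTables N).eq_empty_or_nonempty with hempty | hnonempty
  · exact ⟨f, hf, by simpa [hempty] using (Real.exp_pos _).le⟩
  · obtain ⟨b, hb, hle⟩ :=
      card_integerFlowTables_le (isFlowTable_flowTable_of_mem hf) hnonempty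
    refine ⟨offDiagonal b, hb.offDiagonal_mem, ?_⟩
    rwa [flowEntropy_eq hb.offDiagonal_mem, hb.flowTable_offDiagonal]

end Bounds

end CompleteGraph

/-- **Theorem (flow version of the capacity bound).**
If the flow polytope `F_n(N)` is nonempty, then
`sup_{f ∈ F_n(N)} e^{H(f)} ≥ K_n(N) ≥
  (max_k e^{h(s_k)}) / (∏_k e^{h(s_k)})² · sup_{f ∈ F_n(N)} e^{H(f)}`. -/
theorem kostant_capacity_bounds (n : ℕ) (hn : 1 ≤ n) (N : Fin (n + 1) → ℤ)
    (hsum : ∑ i, N i = 0)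
    (hne : (FlowPolytope n fun i => (N i : ℝ)).Nonempty) :
    sSup ((fun f => Real.exp (flowEntropy n (fun i => (N i : ℝ)) f)) ''
        FlowPolytope n fun i => (N i : ℝ)) ≥ (Kn n N : ℝ) ∧
    (Kn n N : ℝ) ≥
      (⨆ k : Fin n, Real.exp (entH ((sPartial n N k : ℤ) : ℝ))) /
        (∏ k ∈ Finset.range n, Real.exp (entH ((sPartial n N k : ℤ) : ℝ))) ^ 2 *
        sSup ((fun f => Real.exp (flowEntropy n (fun i => (N i : ℝ)) f)) ''
          FlowPolytope n fun i => (N i : ℝ)) := by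
  obtain ⟨f₀, hf₀, hupper⟩ := exists_Kn_le_exp_flowEntropy hne
  refine ⟨hupper.trans (le_csSup (bddAbove_exp_flowEntropy hsum) ⟨f₀, hf₀, rfl⟩), ?_⟩
  have : Nonempty (Fin n) := ⟨⟨0, hn⟩⟩
  obtain ⟨k, hmax⟩ := exists_eq_ciSup_of_finite
    (f := fun k : Fin n => Real.exp (entH ((sPartial n N k : ℤ) : ℝ)))
  rw [← hmax, ge_iff_le, div_mul_eq_mul_div, div_le_iff₀ (by positivity), mul_comm,
    ← le_div_iff₀ (Real.exp_pos _)]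
  refine csSup_le (hne.image _) ?_
  rintro _ ⟨f, hf, rfl⟩
  rw [le_div_iff₀ (Real.exp_pos _), cast_sPartial_eq_sum_lt]
  exact exp_flowEntropy_mul_le hsum hf k.succ
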